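/- arXiv:1604.06126 — 4 statements merged into one kernel-verified Lean document; each statement's English description precedes it below -/
import Mathlib

section
/- Let R, Q > 0 and μ ∈ (-1, 1]. Define w : [0,∞) → ℝ by w(r) = 0 for r ∈ [0,R], w(r) = Q(2R)^{2μ}(r−R)/R for r ∈ (R,2R], and w(r) = Q r^{2μ} for r > 2R. Let ψ be the solution of the ODE ψ''(r) = w(r)ψ(r) for all r > 0 with ψ'(0) = 1 and ψ(0) = 0. Then ψ ∈ C²([0,∞)), ψ is positive on (0,∞) with lim_{r→∞} ψ(r) = +∞, ψ' is positive on [0,∞), and ψ'(r)/ψ(r) ∼ √Q · r^μ as r → +∞, i.e. lim_{r→∞} ψ'(r)/(ψ(r)·√Q·r^μ) = 1. -/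
open Filter Topology Set

theorem trap_aux (f f' S S' : ℝ → ℝ) (a : ℝ)
    (hf : ∀ r ≥ a, HasDerivAt f (f' r) r) (hS : ∀ r ≥ a, HasDerivAt S (S' r) r)
    (hS' : ∀ r ≥ a, 0 < S' r) (hle : ∀ r ≥ a, 0 ≤ f r → f' r ≤ - S' r)
    (hST : Tendsto S atTop atTop) : ∀ᶠ r in atTop, f r ≤ 0 := by
  have h1 : ∃ b ≥ a, f b ≤ 0 := by
    by_contra! hcon
    have hanti : AntitoneOn (fun r => f r + S r) (Ici a) := by
      apply antitoneOn_of_hasDerivWithinAt_nonpos (f' := fun r => f' r + S' r) (convex_Ici a)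
      · intro x hx
        exact ((hf x hx).continuousAt.add (hS x hx).continuousAt).continuousWithinAt
      · intro x hx
        rw [interior_Ici] at hx
        exact ((hf x (le_of_lt hx)).add (hS x (le_of_lt hx))).hasDerivWithinAt
      · intro x hx
        rw [interior_Ici] at hx
        have hx' : x ≥ a := le_of_lt hx
        have := hle x hx' (hcon x hx').le
        linarith
    obtain ⟨r, hr1, hr2⟩ := ((hST.eventually_gt_atTop (f a + S a)).and
      (eventually_ge_atTop a)).exists
    have h2 := hanti (mem_Ici.2 le_rfl) (mem_Ici.2 hr2) hr2
    have h3 := hcon r hr2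
    simp only at h2
    linarith
  obtain ⟨b, hb, hfb⟩ := h1
  filter_upwards [eventually_ge_atTop b] with r hr
  refine image_le_of_deriv_right_lt_deriv_boundary (f := f) (f' := f') (a := b) (b := r)
    (B := fun _ => 0) (B' := fun _ => 0) ?_ ?_ hfb (fun x => hasDerivAt_const x 0) ?_
    (right_mem_Icc.2 hr)
  · intro x hx
    exact (hf x (hb.trans hx.1)).continuousAt.continuousWithinAt
  · intro x hx
    exact (hf x (hb.trans hx.1)).hasDerivWithinAt
  · intro x hx h0
    have hxa : x ≥ a := le_trans hb hx.1
    have := hle x hxa h0.ge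
    have := hS' x hxa
    linarith

/-- Lemma 4.1 of the paper. Let `R, Q > 0` and `μ ∈ (-1,1]`. Let `ψ` be
the solution of `ψ'' = w ψ` on `[0,∞)` with `ψ(0) = 0`, `ψ'(0) = 1`, where `w` is the
piecewise function vanishing on `[0,R]`, linear on `(R,2R]` and equal to `Q r^{2μ}` beyond.
Then `ψ ∈ C²([0,∞))`, `ψ > 0` on `(0,∞)`, `ψ → +∞`, `ψ' > 0` on `[0,∞)`, and
`ψ'(r)/ψ(r) ∼ √Q · r^μ` as `r → +∞`. -/
theorem stmt_0
    (R Q μ : ℝ) (hR : 0 < R) (hQ : 0 < Q) (hμ : μ ∈ Set.Ioc (-1 : ℝ) 1)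
    (w : ℝ → ℝ)
    (hw : ∀ r : ℝ, 0 ≤ r →
      w r = if r ≤ R then 0
            else if r ≤ 2 * R then Q * (2 * R) ^ (2 * μ) / R * (r - R)
            else Q * r ^ (2 * μ))
    (ψ ψ' : ℝ → ℝ)
    (hψ0 : ψ 0 = 0) (hψ'0 : ψ' 0 = 1)
    (hd1 : ∀ r ∈ Set.Ici (0 : ℝ), HasDerivWithinAt ψ (ψ' r) (Set.Ici 0) r)
    (hd2 : ∀ r ∈ Set.Ici (0 : ℝ), HasDerivWithinAt ψ' (w r * ψ r) (Set.Ici 0) r) :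
    ContDiffOn ℝ 2 ψ (Set.Ici 0) ∧
    (∀ r > (0 : ℝ), 0 < ψ r) ∧
    Filter.Tendsto ψ Filter.atTop Filter.atTop ∧
    (∀ r ≥ (0 : ℝ), 0 < ψ' r) ∧
    Filter.Tendsto (fun r => ψ' r / (ψ r * (Real.sqrt Q * r ^ μ)))
      Filter.atTop (nhds 1) := by
  obtain ⟨hμ1, hμ2⟩ := hμ
  have hweq : ∀ r : ℝ, 0 ≤ r →
      w r = Q * (max r (2 * R)) ^ (2 * μ) * min 1 (max 0 ((r - R) / R)) := by
    intro r hr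
    rw [hw r hr]
    split_ifs with h1 h2
    · rw [max_eq_left (div_nonpos_of_nonpos_of_nonneg (by linarith) hR.le)]
      simp
    · rw [max_eq_right h2, max_eq_right (div_nonneg (by linarith) hR.le),
        min_eq_right (by rw [div_le_one hR]; linarith)]
      ring
    · have h3 : 1 ≤ (r - R) / R := by rw [le_div_iff₀ hR]; linarith
      rw [max_eq_left (by linarith), max_eq_right (by linarith), min_eq_left h3, mul_one]
  have hw0 : ∀ r : ℝ, 0 ≤ r → 0 ≤ w r := by
    intro r hr
    rw [hweq r hr]
    have : 0 < max r (2 * R) := lt_max_of_lt_right (by linarith)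
    have h2 : 0 ≤ min 1 (max 0 ((r - R) / R)) := le_min zero_le_one (le_max_left _ _)
    positivity
  have hwc : ContinuousOn w (Ici 0) := by
    have : Continuous (fun r : ℝ =>
        Q * (max r (2 * R)) ^ (2 * μ) * min 1 (max 0 ((r - R) / R))) := by
      refine (continuous_const.mul (Continuous.rpow_const (by fun_prop) ?_)).mul (by fun_prop)
      intro x
      left
      exact (lt_max_of_lt_right (by linarith)).ne'
    exact this.continuousOn.congr (fun r hr => hweq r hr)
  have hc1 : ContinuousOn ψ (Ici 0) := fun r hr => (hd1 r hr).continuousWithinAt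
  have hc2 : ContinuousOn ψ' (Ici 0) := fun r hr => (hd2 r hr).continuousWithinAt
  have hD1 : ∀ r > (0:ℝ), HasDerivAt ψ (ψ' r) r := fun r hr =>
    (hd1 r (le_of_lt hr)).hasDerivAt (Ici_mem_nhds hr)
  have hD2 : ∀ r > (0:ℝ), HasDerivAt ψ' (w r * ψ r) r := fun r hr =>
    (hd2 r (le_of_lt hr)).hasDerivAt (Ici_mem_nhds hr)
  have hCD : ContDiffOn ℝ 2 ψ (Ici 0) := by
    have hU : UniqueDiffOn ℝ (Ici (0:ℝ)) := uniqueDiffOn_Ici 0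
    have e1 : ∀ r ∈ Ici (0:ℝ), derivWithin ψ (Ici 0) r = ψ' r := fun r hr =>
      (hd1 r hr).derivWithin (hU r hr)
    have e2 : ∀ r ∈ Ici (0:ℝ), derivWithin ψ' (Ici 0) r = w r * ψ r := fun r hr =>
      (hd2 r hr).derivWithin (hU r hr)
    have hC1 : ContDiffOn ℝ 1 ψ' (Ici 0) := by
      rw [show (1 : WithTop ℕ∞) = 0 + 1 by norm_num, contDiffOn_succ_iff_derivWithin hU]
      refine ⟨fun r hr => (hd2 r hr).differentiableWithinAt, by simp, ?_⟩
      rw [contDiffOn_zero]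
      exact (hwc.mul hc1).congr e2
    rw [show (2 : WithTop ℕ∞) = 1 + 1 by norm_num, contDiffOn_succ_iff_derivWithin hU]
    exact ⟨fun r hr => (hd1 r hr).differentiableWithinAt, by simp, hC1.congr e1⟩
  have hprod : MonotoneOn (fun r => ψ r * ψ' r) (Ici 0) := by
    apply monotoneOn_of_hasDerivWithinAt_nonneg
      (f' := fun r => ψ' r * ψ' r + ψ r * (w r * ψ r)) (convex_Ici 0) (hc1.mul hc2)
    · intro x hx
      rw [interior_Ici] at hx
      exact ((hD1 x hx).mul (hD2 x hx)).hasDerivWithinAt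
    · intro x hx
      rw [interior_Ici] at hx
      have := mul_nonneg (hw0 x (le_of_lt hx)) (mul_self_nonneg (ψ x))
      have := mul_self_nonneg (ψ' x)
      nlinarith
  have hprod0 : ∀ r ≥ (0:ℝ), 0 ≤ ψ r * ψ' r := by
    intro r hr
    have := hprod (mem_Ici.2 le_rfl) (mem_Ici.2 hr) hr
    simpa [hψ0] using this
  have hsq : MonotoneOn (fun r => ψ' r * ψ' r) (Ici 0) := by
    apply monotoneOn_of_hasDerivWithinAt_nonneg
      (f' := fun r => (w r * ψ r) * ψ' r + ψ' r * (w r * ψ r)) (convex_Ici 0) (hc2.mul hc2)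
    · intro x hx
      rw [interior_Ici] at hx
      exact ((hD2 x hx).mul (hD2 x hx)).hasDerivWithinAt
    · intro x hx
      rw [interior_Ici] at hx
      have := mul_nonneg (hw0 x (le_of_lt hx)) (hprod0 x (le_of_lt hx))
      nlinarith
  have hsq1 : ∀ r ≥ (0:ℝ), 1 ≤ ψ' r * ψ' r := by
    intro r hr
    have := hsq (mem_Ici.2 le_rfl) (mem_Ici.2 hr) hr
    simpa [hψ'0] using this
  have hψ'pos : ∀ r ≥ (0:ℝ), 0 < ψ' r := by
    intro r hr
    by_contra! hneg
    have hiv := intermediate_value_Icc' hr (hc2.mono Icc_subset_Ici_self)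
    obtain ⟨c, hc, hc0⟩ := hiv ⟨hneg, by rw [hψ'0]; exact zero_le_one⟩
    have := hsq1 c hc.1
    rw [hc0] at this
    norm_num at this
  have hψ'1 : ∀ r ≥ (0:ℝ), 1 ≤ ψ' r := by
    intro r hr
    nlinarith [hsq1 r hr, hψ'pos r hr]
  have hψge : ∀ r ≥ (0:ℝ), r ≤ ψ r := by
    have hm : MonotoneOn (fun r => ψ r - r) (Ici 0) := by
      apply monotoneOn_of_hasDerivWithinAt_nonneg
        (f' := fun r => ψ' r - 1) (convex_Ici 0) (hc1.sub continuousOn_id)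
      · intro x hx
        rw [interior_Ici] at hx
        exact ((hD1 x hx).sub (hasDerivAt_id x)).hasDerivWithinAt
      · intro x hx
        rw [interior_Ici] at hx
        have := hψ'1 x (le_of_lt hx)
        linarith
    intro r hr
    have := hm (mem_Ici.2 le_rfl) (mem_Ici.2 hr) hr
    simp only [hψ0] at this
    linarith
  have hψpos : ∀ r > (0:ℝ), 0 < ψ r := fun r hr => lt_of_lt_of_le hr (hψge r (le_of_lt hr))
  refine ⟨hCD, hψpos, ?_, hψ'pos, ?_⟩
  · refine tendsto_atTop_mono' _ ?_ tendsto_id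
    filter_upwards [eventually_ge_atTop 0] with r hr using hψge r hr
  have hq : 0 < √Q := Real.sqrt_pos.2 hQ
  have hμp : 0 < μ + 1 := by linarith
  set s : ℝ → ℝ := fun r => √Q * r ^ μ with hs
  have hspos : ∀ r > (0:ℝ), 0 < s r := fun r hr => mul_pos hq (Real.rpow_pos_of_pos hr μ)
  have hsd : ∀ r > (0:ℝ), HasDerivAt s (μ / r * s r) r := by
    intro r hr
    have := (Real.hasDerivAt_rpow_const (p := μ) (Or.inl (ne_of_gt hr))).const_mul (√Q)
    refine this.congr_deriv ?_
    rw [Real.rpow_sub_one (ne_of_gt hr)]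
    simp only [hs]
    ring
  have hsS : ∀ r > (0:ℝ), HasDerivAt (fun r => √Q / (μ + 1) * r ^ (μ + 1)) (s r) r := by
    intro r hr
    have := (Real.hasDerivAt_rpow_const (p := μ + 1)
      (Or.inl (ne_of_gt hr))).const_mul (√Q / (μ + 1))
    refine this.congr_deriv ?_
    simp only [hs, add_sub_cancel_right]
    field_simp
  have hST : Tendsto (fun r => √Q / (μ + 1) * r ^ (μ + 1)) atTop atTop :=
    (tendsto_rpow_atTop hμp).const_mul_atTop (by positivity)
  have hws : ∀ r > 2 * R, w r = s r * s r := by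
    intro r hr
    have hr0 : 0 < r := by linarith
    rw [hw r hr0.le, if_neg (by linarith), if_neg (by linarith)]
    simp only [hs]
    rw [two_mul, Real.rpow_add hr0]
    nlinarith [Real.mul_self_sqrt hQ.le]
  set u : ℝ → ℝ := fun r => ψ' r / (ψ r * s r) with hu
  have hupos : ∀ r > (0:ℝ), 0 < u r := fun r hr =>
    div_pos (hψ'pos r (le_of_lt hr)) (mul_pos (hψpos r hr) (hspos r hr))
  have hud : ∀ r > 2 * R, HasDerivAt u (s r * (1 - u r ^ 2 - μ / (r * s r) * u r)) r := by
    intro r hr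
    have hr0 : 0 < r := by linarith
    have h1 := hψpos r hr0
    have h2 := hspos r hr0
    refine ((hD2 r hr0).div ((hD1 r hr0).mul (hsd r hr0)) (mul_pos h1 h2).ne').congr_deriv ?_
    rw [hws r hr]
    simp only [hu, Pi.mul_apply]
    field_simp
    ring
  have heps : Tendsto (fun r => μ / (r * s r)) atTop (𝓝 0) := by
    refine Tendsto.div_atTop tendsto_const_nhds ?_
    refine ((tendsto_rpow_atTop hμp).const_mul_atTop hq).congr' ?_
    filter_upwards [eventually_gt_atTop 0] with r hr
    rw [Real.rpow_add_one hr.ne']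
    simp only [hs]
    ring
  rw [Metric.tendsto_nhds]
  intro δ' hδ'
  set δ := δ' / 2 with hδdef
  have hδ : 0 < δ := by positivity
  obtain ⟨a, ha⟩ := eventually_atTop.1 (((Metric.tendsto_nhds.1 heps) (δ / 2)
    (by positivity)).and (eventually_gt_atTop (2 * R)))
  have key := trap_aux (fun r => (u r - 1) ^ 2 - δ ^ 2)
    (fun r => 2 * (u r - 1) * (s r * (1 - u r ^ 2 - μ / (r * s r) * u r)))
    (fun r => δ ^ 2 * (√Q / (μ + 1) * r ^ (μ + 1))) (fun r => δ ^ 2 * s r) a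
    ?_ ?_ ?_ ?_ ?_
  · filter_upwards [key] with r hr
    have h1 : |u r - 1| ≤ δ := abs_le_of_sq_le_sq (by linarith) hδ.le
    rw [Real.dist_eq]
    change |u r - 1| < δ'
    linarith
  · intro r hr
    have := (((hud r (ha r hr).2).sub_const 1).pow 2).sub_const (δ ^ 2)
    refine this.congr_deriv ?_
    norm_num
  · intro r hr
    have hr0 : 0 < r := by linarith [(ha r hr).2]
    exact (hsS r hr0).const_mul _
  · intro r hr
    have hr0 : 0 < r := by linarith [(ha r hr).2]
    have := hspos r hr0
    positivity
  · intro r hr hf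
    have hr0 : 0 < r := by linarith [(ha r hr).2]
    have h1 := hspos r hr0
    have h2 := hupos r hr0
    have he := (ha r hr).1
    rw [Real.dist_eq, sub_zero] at he
    generalize μ / (r * s r) = e at he
    generalize u r = x at *
    generalize s r = t at *
    have h3 : δ ≤ |x - 1| := by
      rw [← abs_of_pos hδ]
      exact sq_le_sq.1 (by linarith)
    have h4 : |e * (x - 1)| ≤ (x - 1) ^ 2 / 2 := by
      rw [abs_mul, ← sq_abs (x - 1)]
      nlinarith [abs_nonneg (x - 1)]
    have h5 : - (e * (x - 1)) ≤ (x - 1) ^ 2 / 2 := (neg_le_abs _).trans h4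
    have h6 : 2 * (x - 1) * (1 - x ^ 2 - e * x) ≤ - δ ^ 2 := by
      nlinarith [mul_le_mul_of_nonneg_left h5 h2.le, mul_nonneg h2.le (sq_nonneg (x - 1))]
    nlinarith [mul_le_mul_of_nonneg_left h6 h1.le]
  · exact hST.const_mul_atTop (by positivity)
end

section
/- Let m > 1, n ≥ 2 an integer, μ ∈ (-1,1), and R, Q, D > 0. Let ψ be the solution of ψ'' = wψ on (0,∞) with ψ(0)=0, ψ'(0)=1, where for μ ∈ (−1,0): w(r) = D on [0,R], w(r) = Q(2R)^{2μ}(r−R)/R + D(2R−r)/R on (R,2R], w(r) = Q r^{2μ} for r > 2R; and for μ ∈ [0,1): w(r) = max{D, Q r^{2μ}}. Then there exists R̄ > 0 depending only on n, m, μ, R, Q, D such that for every R₀ ≥ R̄ the following holds. Let F > 0 satisfy (n−1)ψ'(r)·r/ψ(r) ≤ F for all r ∈ (0, R₀), and suppose also (n−1)ψ'(r)/(ψ(r) r^μ) − μ/r^{1+μ} ≤ (n−1)√(2Q) for all r ≥ R₀. Suppose C > 0 satisfies C^{m−1} ≤ (1/(m(1−μ))) · min{ 1/(2(n−1)√(2Q)),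 R₀^{1+μ}/(4(F+1)), (m−1)R₀^{1+μ}/(2+(m−1)(F+1)) }, that 0 < γ ≤ [m(1+μ)(1−μ)C^{m−1}/(m−1)]^{(1−μ)/(1+μ)}, and that (γ^{(1+μ)/(1−μ)}/R₀^{1+μ}) log t₀ ≥ [ (4(m−1)R₀^{1+μ} − 4m(1−μ)[(m−1)(F+1)+1−μ]C^{m−1}) / ((3+μ)(m−1)R₀^{1+μ} − 4m(m−1)(1−μ)(F+1)C^{m−1}) ]^{(1+μ)/(1−μ)}. Define U̲(r,t) for t ≥ 0 by (t+t₀)^{1/(m−1)} U̲(r,t) = C(γ[log(t+t₀)]^{(1−μ)/(1+μ)} − r^{1−μ})₊^{1/(m−1)} for r ≥ R₀, and (t+t₀)^{1/(m−1)} U̲(r,t) = C(γ[log(t+t₀)]^{(1−μ)/(1+μ)} − ((1−μ)/(2R₀^{1+μ}))r² − ((1+μ)/2)R₀^{1−μ})₊^{1/(m−1)} for 0 ≤ r < R₀. Then at every point (r,t) ∈ ((0,∞)∖{R₀}) × (0,∞) at which U̲(r,t) > 0, the pointwise subsolution inequality ∂_t U̲ ≤ ∂²_{rr}(U̲^m)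 + (n−1)(ψ'(r)/ψ(r)) ∂_r(U̲^m) holds. -/
/-- The lower barrier `U̲(r,t)` of Lemma 4.6 of the paper (same formula as the upper
barrier of Lemma 4.4). -/
noncomputable def Ulow (m μ R₀ t₀ C γ : ℝ) (r t : ℝ) : ℝ :=
  (if R₀ ≤ r then
      C * (max (γ * (Real.log (t + t₀)) ^ ((1 - μ) / (1 + μ)) - r ^ (1 - μ)) 0)
        ^ (1 / (m - 1))
    else
      C * (max (γ * (Real.log (t + t₀)) ^ ((1 - μ) / (1 + μ))
            - (1 - μ) / (2 * R₀ ^ (1 + μ)) * r ^ 2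
            - (1 + μ) / 2 * R₀ ^ (1 - μ)) 0) ^ (1 / (m - 1)))
    / (t + t₀) ^ (1 / (m - 1))


open Filter Topology in
theorem aux_space (f G g : ℝ → ℝ) (C T a m r h : ℝ) (hC : 0 < C) (hT : 0 < T)
    (ham : a * m = a + 1)
    (hf : f =ᶠ[𝓝 r] fun x => (C * (max (G x) 0) ^ a / T) ^ m)
    (hG : 0 < G r) (hg : ∀ᶠ x in 𝓝 r, HasDerivAt G (g x) x) (hh : HasDerivAt g h r) :
    deriv f r = (C / T) ^ m * ((a + 1) * G r ^ a * g r) ∧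
    deriv (deriv f) r = (C / T) ^ m * ((a + 1) * (a * G r ^ (a - 1) * g r ^ 2 + G r ^ a * h)) := by
  have hGc : ContinuousAt G r := hg.self_of_nhds.continuousAt
  have hpos : ∀ᶠ x in 𝓝 r, 0 < G x := hGc.eventually (lt_mem_nhds hG)
  have h1 : f =ᶠ[𝓝 r] fun x => (C / T) ^ m * G x ^ (a + 1) := by
    filter_upwards [hf, hpos] with x hx hx0
    rw [hx, max_eq_left hx0.le]
    have : C * G x ^ a / T = (C / T) * G x ^ a := by ring
    rw [this, Real.mul_rpow (by positivity) (by positivity), ← Real.rpow_mul hx0.le, ham]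
  have h2 : deriv f =ᶠ[𝓝 r] fun x => (C / T) ^ m * ((a + 1) * G x ^ a * g x) := by
    filter_upwards [h1.eventuallyEq_nhds, hpos, hg] with x hx hx0 hgx
    rw [hx.deriv_eq]
    have := (hgx.rpow_const (p := a + 1) (Or.inl hx0.ne')).const_mul ((C / T) ^ m)
    rw [this.deriv, add_sub_cancel_right]; ring
  refine ⟨h2.self_of_nhds, ?_⟩
  rw [h2.deriv_eq]
  have h3 := hg.self_of_nhds.rpow_const (p := a) (Or.inl hG.ne')
  have := (((h3.const_mul (a + 1)).mul hh).const_mul ((C / T) ^ m))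
  have h4 := this.deriv
  simp only [Pi.mul_apply] at h4
  refine (Eq.trans ?_ h4).trans ?_
  · rfl
  · ring

open Filter Topology in
theorem aux_time (f : ℝ → ℝ) (C a γ p X t t₀ : ℝ) (hC : 0 < C)
    (hτ : 1 < t + t₀)
    (hf : f = fun s => C * (max (γ * Real.log (s + t₀) ^ p - X) 0) ^ a / (s + t₀) ^ a)
    (hG : 0 < γ * Real.log (t + t₀) ^ p - X) :
    deriv f t = C / (t + t₀) ^ a * a * (γ * Real.log (t + t₀) ^ p - X) ^ (a - 1) / (t + t₀)
      * (-(γ * Real.log (t + t₀) ^ p - X) + γ * p * Real.log (t + t₀) ^ (p - 1)) := by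
  have hL : 0 < Real.log (t + t₀) := Real.log_pos hτ
  have hτ0 : 0 < t + t₀ := by linarith
  have e1 : HasDerivAt (fun s => s + t₀) 1 t := (hasDerivAt_id t).add_const t₀
  have e2 := e1.log hτ0.ne'
  have e3 := ((e2.rpow_const (p := p) (Or.inl hL.ne')).const_mul γ).sub_const X
  have hpos : ∀ᶠ s in 𝓝 t, 0 < γ * Real.log (s + t₀) ^ p - X :=
    e3.continuousAt.eventually (lt_mem_nhds hG)
  have e4 := ((e3.rpow_const (p := a) (Or.inl hG.ne')).const_mul C).div
    (e1.rpow_const (p := a) (Or.inl hτ0.ne')) (by positivity)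
  have h1 : f =ᶠ[𝓝 t] fun s => C * (γ * Real.log (s + t₀) ^ p - X) ^ a / (s + t₀) ^ a := by
    filter_upwards [hpos] with s hs
    rw [hf]; simp only [max_eq_left hs.le]
  rw [h1.deriv_eq]
  refine (Eq.trans ?_ e4.deriv).trans ?_
  · rfl
  · rw [Real.rpow_sub_one hτ0.ne', Real.rpow_sub_one hG.ne']
    have : (t + t₀) ^ a ≠ 0 := by positivity
    field_simp
    ring

theorem aux_comb (C T τ a m c G g h k Z : ℝ) (hC : 0 < C) (hτ : 0 < τ) (ha : 0 < a)
    (hTd : T = τ ^ a) (hc : c = C ^ (m - 1))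
    (ham : a * m = a + 1) (hG : 0 < G)
    (hmain : -G + Z ≤ c * m * (a * g ^ 2 + G * (h + k * g))) :
    C / T * a * G ^ (a - 1) / τ * (-G + Z) ≤
      (C / T) ^ m * ((a + 1) * (a * G ^ (a - 1) * g ^ 2 + G ^ a * h))
       + k * ((C / T) ^ m * ((a + 1) * G ^ a * g)) := by
  have hT : 0 < T := by rw [hTd]; positivity
  have e1 : (C / T) ^ m = C / T * c / τ := by
    rw [Real.div_rpow hC.le hT.le, hTd, ← Real.rpow_mul hτ.le, ham, Real.rpow_add_one hτ.ne', hc,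
      Real.rpow_sub_one hC.ne']
    field_simp
  have e2 : G ^ a = G ^ (a - 1) * G := by rw [Real.rpow_sub_one hG.ne']; field_simp
  rw [e1, e2, ← ham]
  have := mul_le_mul_of_nonneg_left hmain
    (show 0 ≤ C / T * a * G ^ (a - 1) / τ by positivity)
  refine this.trans (le_of_eq ?_)
  ring

/-- outer region -/
theorem aux_outer (a m c μ Γ γ L A N s k r y : ℝ) (hμ1 : -1 < μ) (hμ2 : μ < 1)
    (ha : 0 < a) (hm : 0 < m) (hc : 0 < c)
    (hN : 0 < N) (hs : 0 < s) (hr : 0 < r) (hA : 0 < A) (hAr : A ≤ r ^ (1 + μ))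
    (hL : 0 < L) (hγ : 0 < γ) (hΓ : Γ = γ ^ ((1 + μ) / (1 - μ)))
    (hΓ1 : (1 - μ) / (1 + μ) * Γ ≤ c * m * a * (1 - μ) ^ 2)
    (hκ : c * m * a * (1 - μ) ^ 2 ≤ (1 - μ) * A / 4)
    (hcs : c * m * (1 - μ) * (N * s) ≤ 1 / 2)
    (hk : k / r ^ μ - μ / r ^ (1 + μ) ≤ N * s)
    (hy : y = γ * L ^ ((1 - μ) / (1 + μ))) (hG : 0 < y - r ^ (1 - μ)) :
    -(y - r ^ (1 - μ)) + γ * ((1 - μ) / (1 + μ)) * L ^ ((1 - μ) / (1 + μ) - 1) ≤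
      c * m * (a * (-((1 - μ) * r ^ (-μ))) ^ 2
        + (y - r ^ (1 - μ)) * ((1 - μ) * μ * r ^ (-μ - 1) + k * (-((1 - μ) * r ^ (-μ))))) := by
  have q1 : 0 < 1 - μ := by linarith
  have q2 : 0 < 1 + μ := by linarith
  have hyp : 0 < y := by rw [hy]; positivity
  set p := (1 - μ) / (1 + μ) with hp
  have hp0 : 0 < p := by positivity
  set q := -2 * μ / (1 - μ) with hq
  set x := r ^ (1 - μ) with hx
  have hx0 : 0 < x := by positivity
  have hΓ0 : 0 < Γ := by rw [hΓ]; positivity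
  have e1 : γ * p * L ^ (p - 1) = p * Γ * y ^ q := by
    rw [hy, Real.mul_rpow hγ.le (by positivity), ← Real.rpow_mul hL.le, hΓ]
    have i1 : p * q = p - 1 := by rw [hp, hq]; field_simp; ring
    have i2 : γ ^ ((1 + μ) / (1 - μ)) * γ ^ q = γ := by
      rw [← Real.rpow_add hγ]
      have : (1 + μ) / (1 - μ) + q = 1 := by rw [hq]; field_simp; ring
      rw [this, Real.rpow_one]
    rw [i1]
    calc γ * p * L ^ (p - 1) = p * (γ ^ ((1 + μ) / (1 - μ)) * γ ^ q) * L ^ (p - 1) := by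
          rw [i2]; ring
      _ = _ := by ring
  have e2 : (r ^ (-μ)) ^ 2 = x ^ q := by
    rw [hx, ← Real.rpow_mul hr.le, ← Real.rpow_natCast, ← Real.rpow_mul hr.le]
    congr 1; rw [hq]; push_cast; field_simp
  have e3 : k / r ^ μ - μ / r ^ (1 + μ) = k * r ^ (-μ) - μ * r ^ (-μ - 1) := by
    rw [Real.rpow_neg hr.le, show -μ - 1 = -(1 + μ) by ring, Real.rpow_neg hr.le]
    ring
  rw [e3] at hk
  have e4 : x ^ q / x ≤ 1 / A := by
    have : x ^ q / x = 1 / r ^ (1 + μ) := by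
      rw [← Real.rpow_sub_one hx0.ne', hx, ← Real.rpow_mul hr.le, one_div, ← Real.rpow_neg hr.le]
      congr 1; rw [hq]; field_simp; ring
    rw [this]
    exact one_div_le_one_div_of_le hA hAr
  have key : p * Γ * (y ^ q - x ^ q) ≤ (y - x) / 2 := by
    rcases le_or_gt 0 μ with h0 | h0
    · have : y ^ q ≤ x ^ q := by
        apply Real.rpow_le_rpow_of_nonpos hx0 (by linarith)
        rw [hq]; apply div_nonpos_of_nonpos_of_nonneg <;> linarith
      have : p * Γ * (y ^ q - x ^ q) ≤ 0 :=
        mul_nonpos_of_nonneg_of_nonpos (by positivity) (by linarith)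
      linarith
    · have hq0 : 0 ≤ q := by rw [hq]; apply div_nonneg <;> linarith
      have hq1 : q ≤ 1 := by rw [hq, div_le_one q1]; linarith
      have b := rpow_one_add_le_one_add_mul_self (s := y / x - 1)
        (by have : 0 < y / x := by positivity
            linarith) hq0 hq1
      have b2 : y ^ q - x ^ q ≤ x ^ q / x * (q * (y - x)) := by
        rw [add_sub_cancel, Real.div_rpow hyp.le hx0.le, div_le_iff₀ (by positivity)] at b
        calc _ ≤ (1 + q * (y / x - 1)) * x ^ q - x ^ q := by linarith
          _ = _ := by field_simp; ring
      have b3 : y ^ q - x ^ q ≤ 1 / A * (q * (y - x)) :=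
        b2.trans (mul_le_mul_of_nonneg_right e4 (by positivity))
      calc p * Γ * (y ^ q - x ^ q) ≤ ((1 - μ) * A / 4) * (1 / A * (q * (y - x))) := by
            refine (mul_le_mul_of_nonneg_left b3 (by positivity)).trans ?_
            exact mul_le_mul_of_nonneg_right (by linarith) (by positivity)
        _ = (-μ) * ((y - x) / 2) := by rw [hq]; field_simp; ring
        _ ≤ 1 * ((y - x) / 2) := mul_le_mul_of_nonneg_right (by linarith) (by linarith)
        _ = _ := one_mul _
  have f1 : c * m * (1 - μ) * (k * r ^ (-μ) - μ * r ^ (-μ - 1)) ≤ 1 / 2 :=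
    (mul_le_mul_of_nonneg_left hk (by positivity)).trans hcs
  have f2 := mul_le_mul_of_nonneg_right f1 hG.le
  have f3 : p * Γ * x ^ q ≤ c * m * a * (1 - μ) ^ 2 * x ^ q :=
    mul_le_mul_of_nonneg_right hΓ1 (by positivity)
  rw [e1]
  have f4 : c * m * (a * (-((1 - μ) * r ^ (-μ))) ^ 2
        + (y - x) * ((1 - μ) * μ * r ^ (-μ - 1) + k * (-((1 - μ) * r ^ (-μ)))))
      = c * m * a * (1 - μ) ^ 2 * x ^ q
        - c * m * (1 - μ) * (k * r ^ (-μ) - μ * r ^ (-μ - 1)) * (y - x) := by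
    rw [← e2]; ring
  rw [f4]
  linarith

/-- inner region -/
theorem aux_inner (a m c μ Γ γ L A B F k r y R₀ : ℝ) (hμ1 : -1 < μ) (hμ2 : μ < 1)
    (ha : a = 1 / (m - 1)) (hm : 1 < m) (hc : 0 < c)
    (hR : 0 < R₀) (hr : 0 < r) (hrR : r < R₀) (hAd : A = R₀ ^ (1 + μ)) (hBd : B = R₀ ^ (1 - μ))
    (hL : 0 < L) (hγ : 0 < γ) (hΓ : Γ = γ ^ ((1 + μ) / (1 - μ))) (hF : 0 < F)
    (hΓ1 : (1 - μ) / (1 + μ) * Γ ≤ c * m * a * (1 - μ) ^ 2)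
    (hκ : c * m * a * (1 - μ) ^ 2 ≤ (1 - μ) * A / 4)
    (hc2 : c * m * (1 - μ) * (4 * (F + 1)) ≤ A)
    (hc3 : c * m * (1 - μ) * (2 + (m - 1) * (F + 1)) ≤ (m - 1) * A)
    (hk : k * r ≤ F)
    (hlog : ((4 * (m - 1) * A - 4 * m * (1 - μ) * ((m - 1) * (F + 1) + 1 - μ) * c) /
            ((3 + μ) * (m - 1) * A - 4 * m * (m - 1) * (1 - μ) * (F + 1) * c))
            ^ ((1 + μ) / (1 - μ)) ≤ Γ / A * L)
    (hy : y = γ * L ^ ((1 - μ) / (1 + μ)))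
    (hG : 0 < y - (1 - μ) / (2 * A) * r ^ 2 - (1 + μ) / 2 * B) :
    -(y - (1 - μ) / (2 * A) * r ^ 2 - (1 + μ) / 2 * B)
        + γ * ((1 - μ) / (1 + μ)) * L ^ ((1 - μ) / (1 + μ) - 1) ≤
      c * m * (a * (-((1 - μ) / A * r)) ^ 2
        + (y - (1 - μ) / (2 * A) * r ^ 2 - (1 + μ) / 2 * B)
          * (-((1 - μ) / A) + k * (-((1 - μ) / A * r)))) := by
  have q1 : 0 < 1 - μ := by linarith
  have q2 : 0 < 1 + μ := by linarith
  have m1 : 0 < m - 1 := by linarith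
  have ha0 : 0 < a := by rw [ha]; positivity
  have hyp : 0 < y := by rw [hy]; positivity
  have hA : 0 < A := by rw [hAd]; positivity
  have hB : 0 < B := by rw [hBd]; positivity
  have hΓ0 : 0 < Γ := by rw [hΓ]; positivity
  have hAB : A * B = R₀ ^ 2 := by
    rw [hAd, hBd, ← Real.rpow_add hR, ← Real.rpow_natCast]; congr 1; push_cast; ring
  set θ := c * m * (1 - μ) * (F + 1) / A with hθ
  set κ := c * m * a * (1 - μ) ^ 2 / A with hκd
  have hθ1 : θ ≤ 1 / 4 := by rw [hθ, div_le_iff₀ hA]; linarith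
  have hκ1 : κ ≤ (1 - μ) / 4 := by rw [hκd, div_le_iff₀ hA]; linarith
  have hκ0 : 0 < κ := by rw [hκd]; positivity
  have hs3 : 2 * κ ≤ (1 - μ) * (1 - θ) := by
    have i1 : 2 * c * m * (1 - μ) * a / A + θ ≤ 1 := by
      rw [hθ, ← add_div, div_le_one hA, ha]
      have := (div_le_div_iff_of_pos_right m1).2 hc3
      have i2 : (m - 1) * A / (m - 1) = A := by field_simp
      rw [i2] at this
      refine le_trans (le_of_eq ?_) this
      field_simp
    have i3 : 2 * κ = (1 - μ) * (2 * c * m * (1 - μ) * a / A) := by rw [hκd]; ring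
    rw [i3]
    exact mul_le_mul_of_nonneg_left (by linarith) q1.le
  set ρ := ((4 * (m - 1) * A - 4 * m * (1 - μ) * ((m - 1) * (F + 1) + 1 - μ) * c) /
            ((3 + μ) * (m - 1) * A - 4 * m * (m - 1) * (1 - μ) * (F + 1) * c)) with hρd
  have hden : 0 < (3 + μ) / 4 - θ := by linarith
  have hρ : ρ = (1 - θ - κ) / ((3 + μ) / 4 - θ) := by
    have n1 : 4 * (m - 1) * A - 4 * m * (1 - μ) * ((m - 1) * (F + 1) + 1 - μ) * c
        = (4 * (m - 1) * A) * (1 - θ - κ) := by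
      rw [hθ, hκd, ha]; field_simp; ring
    have n2 : (3 + μ) * (m - 1) * A - 4 * m * (m - 1) * (1 - μ) * (F + 1) * c
        = (4 * (m - 1) * A) * ((3 + μ) / 4 - θ) := by
      rw [hθ]; field_simp
    rw [hρd, n1, n2, mul_div_mul_left _ _ (by positivity)]
  have hρ1 : 1 ≤ ρ := by rw [hρ, le_div_iff₀ hden]; linarith
  have hΓL : A * ρ ^ ((1 + μ) / (1 - μ)) ≤ Γ * L := by
    have := mul_le_mul_of_nonneg_left hlog hA.le
    refine this.trans (le_of_eq ?_); field_simp
  have hΓL1 : A ≤ Γ * L := by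
    have : 1 ≤ ρ ^ ((1 + μ) / (1 - μ)) := Real.one_le_rpow hρ1 (by positivity)
    exact (le_mul_of_one_le_right hA.le this).trans hΓL
  have hyρ : B * ρ ≤ y := by
    have := Real.rpow_le_rpow (z := (1 - μ) / (1 + μ)) (by positivity) hΓL (by positivity)
    have j : (1 + μ) / (1 - μ) * ((1 - μ) / (1 + μ)) = 1 := by field_simp
    rw [Real.mul_rpow hA.le (by positivity), Real.mul_rpow hΓ0.le hL.le, hΓ,
      ← Real.rpow_mul (by positivity), ← Real.rpow_mul hγ.le, j, Real.rpow_one, Real.rpow_one,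
      ← hy, hAd, ← Real.rpow_mul hR.le] at this
    have j2 : (1 + μ) * ((1 - μ) / (1 + μ)) = 1 - μ := by field_simp
    rwa [j2, ← hBd] at this
  have hyB : (1 - μ) / 4 * y ≤ (y - B) * (1 - θ) + κ * B := by
    have : B * (1 - θ - κ) ≤ y * ((3 + μ) / 4 - θ) := by
      have := mul_le_mul_of_nonneg_right hyρ hden.le
      rw [hρ] at this
      rwa [mul_assoc, div_mul_cancel₀ _ hden.ne'] at this
    linarith
  have hpL : (1 - μ) / (1 + μ) ≤ (1 - μ) / 4 * L := by
    have : (1 - μ) / (1 + μ) * Γ ≤ (1 - μ) / 4 * L * Γ := by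
      have i := mul_le_mul_of_nonneg_left hΓL1 (show 0 ≤ (1 - μ) / 4 by positivity)
      linarith
    exact le_of_mul_le_mul_right this hΓ0
  have hZ : γ * ((1 - μ) / (1 + μ)) * L ^ ((1 - μ) / (1 + μ) - 1) ≤ (1 - μ) / 4 * y := by
    rw [Real.rpow_sub_one hL.ne', hy]
    have : 0 < γ * L ^ ((1 - μ) / (1 + μ)) / L := by positivity
    calc _ = (γ * L ^ ((1 - μ) / (1 + μ)) / L) * ((1 - μ) / (1 + μ)) := by ring
      _ ≤ (γ * L ^ ((1 - μ) / (1 + μ)) / L) * ((1 - μ) / 4 * L) :=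
        mul_le_mul_of_nonneg_left hpL this.le
      _ = _ := by field_simp
  set s := r ^ 2 / R₀ ^ 2 with hs
  have hs1 : s ≤ 1 := by rw [hs, div_le_one (by positivity)]; gcongr
  have hr2 : r ^ 2 = s * (A * B) := by rw [hAB, hs]; field_simp
  have hGe : y - (1 - μ) / (2 * A) * r ^ 2 - (1 + μ) / 2 * B
      = y - B * ((1 - μ) / 2 * s + (1 + μ) / 2) := by
    rw [hr2]; field_simp; ring
  set G := y - (1 - μ) / (2 * A) * r ^ 2 - (1 + μ) / 2 * B with hGd
  have hRe : c * m * (a * (-((1 - μ) / A * r)) ^ 2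
        + G * (-((1 - μ) / A) + k * (-((1 - μ) / A * r))))
      = κ * B * s - c * m * (1 - μ) / A * G * (1 + k * r) := by
    have : (-((1 - μ) / A * r)) ^ 2 = ((1 - μ) / A) ^ 2 * (s * (A * B)) := by rw [← hr2]; ring
    rw [this, hκd]; field_simp; ring
  rw [hRe]
  have g1 : c * m * (1 - μ) / A * G * (1 + k * r) ≤ θ * G := by
    have : c * m * (1 - μ) / A * G * (1 + k * r) ≤ c * m * (1 - μ) / A * G * (F + 1) :=
      mul_le_mul_of_nonneg_left (by linarith) (by positivity)
    refine this.trans (le_of_eq ?_); rw [hθ]; ring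
  have g2 : (y - B) * (1 - θ) + κ * B ≤ G * (1 - θ) + κ * B * s := by
    have : 0 ≤ (1 - s) * B * ((1 - μ) * (1 - θ) - 2 * κ) :=
      mul_nonneg (mul_nonneg (by linarith) hB.le) (by linarith)
    rw [hGe]; linarith
  linarith

theorem aux_rho_pos (m c μ A F : ℝ) (hμ1 : -1 < μ) (hμ2 : μ < 1) (hm : 1 < m) (hc : 0 < c)
    (hF : 0 < F) (hA : 0 < A)
    (hc2 : c * m * (1 - μ) * (4 * (F + 1)) ≤ A)
    (hc3 : c * m * (1 - μ) * (2 + (m - 1) * (F + 1)) ≤ (m - 1) * A) :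
    0 < (4 * (m - 1) * A - 4 * m * (1 - μ) * ((m - 1) * (F + 1) + 1 - μ) * c) /
            ((3 + μ) * (m - 1) * A - 4 * m * (m - 1) * (1 - μ) * (F + 1) * c) := by
  have m1 : 0 < m - 1 := by linarith
  have q1 : 0 < 1 - μ := by linarith
  have q2 : 0 < 1 + μ := by linarith
  apply div_pos
  · have : 0 < c * m * (1 - μ) * (1 + μ) := by positivity
    linarith
  · have i := mul_le_mul_of_nonneg_left hc2 m1.le
    have : 0 < (2 + μ) * ((m - 1) * A) := mul_pos (by linarith) (by positivity)
    linarith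

/-- Lemma 4.6 of the paper. Under the stated conditions on
`R₀, F, C, γ, t₀`, the barrier `U̲` is a pointwise subsolution of the radial porous
medium equation `u_t = (u^m)_{rr} + (n-1)(ψ'/ψ)(u^m)_r` at every point of positivity
off `r = R₀`. -/
theorem stmt_4
    (m : ℝ) (hm : 1 < m) (n : ℕ) (hn : 2 ≤ n)
    (μ : ℝ) (hμ : μ ∈ Set.Ioo (-1 : ℝ) 1)
    (R Q D : ℝ) (hR : 0 < R) (hQ : 0 < Q) (hD : 0 < D)
    (w ψ ψ' : ℝ → ℝ)
    (hw : ∀ r : ℝ, 0 ≤ r →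
      w r = if μ < 0 then
              (if r ≤ R then D
               else if r ≤ 2 * R then
                 Q * (2 * R) ^ (2 * μ) / R * (r - R) + D / R * (2 * R - r)
               else Q * r ^ (2 * μ))
            else max D (Q * r ^ (2 * μ)))
    (hψ0 : ψ 0 = 0) (hψ'0 : ψ' 0 = 1)
    (hd1 : ∀ r ∈ Set.Ici (0 : ℝ), HasDerivWithinAt ψ (ψ' r) (Set.Ici 0) r)
    (hd2 : ∀ r ∈ Set.Ici (0 : ℝ), HasDerivWithinAt ψ' (w r * ψ r) (Set.Ici 0) r) :
    ∃ Rbar : ℝ, 0 < Rbar ∧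
      ∀ R₀ : ℝ, Rbar ≤ R₀ →
      ∀ F : ℝ, 0 < F →
        (∀ r ∈ Set.Ioo (0 : ℝ) R₀, ((n : ℝ) - 1) * ψ' r * r / ψ r ≤ F) →
        (∀ r : ℝ, R₀ ≤ r →
          ((n : ℝ) - 1) * ψ' r / (ψ r * r ^ μ) - μ / r ^ (1 + μ)
            ≤ ((n : ℝ) - 1) * Real.sqrt (2 * Q)) →
      ∀ t₀ C γ : ℝ, 0 < t₀ → 0 < C →
        C ^ (m - 1) ≤ (1 / (m * (1 - μ))) *
          min (1 / (2 * ((n : ℝ) - 1) * Real.sqrt (2 * Q)))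
            (min (R₀ ^ (1 + μ) / (4 * (F + 1)))
              ((m - 1) * R₀ ^ (1 + μ) / (2 + (m - 1) * (F + 1)))) →
        0 < γ →
        γ ≤ (m * (1 + μ) * (1 - μ) * C ^ (m - 1) / (m - 1)) ^ ((1 - μ) / (1 + μ)) →
        (γ ^ ((1 + μ) / (1 - μ)) / R₀ ^ (1 + μ)) * Real.log t₀ ≥
          ((4 * (m - 1) * R₀ ^ (1 + μ)
              - 4 * m * (1 - μ) * ((m - 1) * (F + 1) + 1 - μ) * C ^ (m - 1)) /
            ((3 + μ) * (m - 1) * R₀ ^ (1 + μ)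
              - 4 * m * (m - 1) * (1 - μ) * (F + 1) * C ^ (m - 1)))
            ^ ((1 + μ) / (1 - μ)) →
      ∀ r t : ℝ, 0 < r → r ≠ R₀ → 0 < t → 0 < Ulow m μ R₀ t₀ C γ r t →
        deriv (fun s => Ulow m μ R₀ t₀ C γ r s) t
          ≤ deriv (deriv (fun x => (Ulow m μ R₀ t₀ C γ x t) ^ m)) r
            + ((n : ℝ) - 1) * (ψ' r / ψ r)
              * deriv (fun x => (Ulow m μ R₀ t₀ C γ x t) ^ m) r := by
  obtain ⟨hμ1, hμ2⟩ := hμ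
  have q1 : 0 < 1 - μ := by linarith
  have q2 : 0 < 1 + μ := by linarith
  have m1 : 0 < m - 1 := by linarith
  have m0 : 0 < m := by linarith
  have hN1 : (1 : ℝ) ≤ (n : ℝ) - 1 := by
    have : (2 : ℝ) ≤ n := by exact_mod_cast hn
    linarith
  set N := (n : ℝ) - 1 with hN
  set s := Real.sqrt (2 * Q) with hs
  have hs0 : 0 < s := Real.sqrt_pos.2 (by positivity)
  set a := 1 / (m - 1) with ha
  have ha0 : 0 < a := by positivity
  have ham : a * m = a + 1 := by rw [ha]; field_simp; ring
  refine ⟨(2 * a / s + 1) ^ (1 / (1 + μ)), by positivity, ?_⟩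
  intro R₀ hR₀ F hF hF1 hF2 t₀ C γ ht₀ hC hCb hγ hγb hlog r t hr hrR ht hU
  have hR₀p : 0 < R₀ := lt_of_lt_of_le (by positivity) hR₀
  have hA1 : 2 * a / s ≤ R₀ ^ (1 + μ) := by
    have := Real.rpow_le_rpow (z := 1 + μ) (by positivity) hR₀ q2.le
    rw [← Real.rpow_mul (by positivity), one_div_mul_cancel q2.ne', Real.rpow_one] at this
    linarith
  have hA : 0 < R₀ ^ (1 + μ) := by positivity
  set A := R₀ ^ (1 + μ) with hAd
  set c := C ^ (m - 1) with hcd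
  have hc0 : 0 < c := by positivity
  have hcb : c * m * (1 - μ) ≤ min (1 / (2 * N * s))
      (min (A / (4 * (F + 1))) ((m - 1) * A / (2 + (m - 1) * (F + 1)))) := by
    have := mul_le_mul_of_nonneg_left hCb (show 0 ≤ m * (1 - μ) by positivity)
    rw [← mul_assoc, mul_one_div_cancel (by positivity), one_mul] at this
    linarith
  rw [le_min_iff, le_min_iff, le_div_iff₀ (by positivity), le_div_iff₀ (by positivity),
    le_div_iff₀ (by positivity)] at hcb
  obtain ⟨hc1, hc2, hc3⟩ := hcb
  have hcs : c * m * (1 - μ) * (N * s) ≤ 1 / 2 := by linarith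
  have hκ : c * m * a * (1 - μ) ^ 2 ≤ (1 - μ) * A / 4 := by
    have i1 : c * m * (1 - μ) * s ≤ 1 / 2 := by
      refine le_trans ?_ hcs
      exact mul_le_mul_of_nonneg_left (le_mul_of_one_le_left hs0.le hN1) (by positivity)
    have i2 : c * m * (1 - μ) ≤ 1 / 2 / s := by rwa [le_div_iff₀ hs0]
    calc c * m * a * (1 - μ) ^ 2 = c * m * (1 - μ) * (a * (1 - μ)) := by ring
      _ ≤ 1 / 2 / s * (a * (1 - μ)) := mul_le_mul_of_nonneg_right i2 (by positivity)
      _ = (1 - μ) / 4 * (2 * a / s) := by field_simp; ring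
      _ ≤ (1 - μ) / 4 * A := mul_le_mul_of_nonneg_left hA1 (by positivity)
      _ = _ := by ring
  set Γ := γ ^ ((1 + μ) / (1 - μ)) with hΓ
  have hΓ0 : 0 < Γ := by positivity
  have hΓ1 : (1 - μ) / (1 + μ) * Γ ≤ c * m * a * (1 - μ) ^ 2 := by
    have := Real.rpow_le_rpow (z := (1 + μ) / (1 - μ)) hγ.le hγb (by positivity)
    have j : (1 - μ) / (1 + μ) * ((1 + μ) / (1 - μ)) = 1 := by field_simp
    rw [← Real.rpow_mul (by positivity), j, Real.rpow_one] at this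
    calc _ ≤ (1 - μ) / (1 + μ) * (m * (1 + μ) * (1 - μ) * c / (m - 1)) :=
          mul_le_mul_of_nonneg_left this (by positivity)
      _ = _ := by rw [ha]; field_simp
  have hρ := aux_rho_pos m c μ A F hμ1 hμ2 hm hc0 hF hA hc2 hc3
  have hl0 : 0 < Real.log t₀ := by
    have := lt_of_lt_of_le (Real.rpow_pos_of_pos hρ ((1 + μ) / (1 - μ))) hlog
    exact pos_of_mul_pos_right this (by positivity)
  have ht1 : 1 < t₀ := (Real.log_pos_iff ht₀.le).1 hl0
  have hτ : 1 < t + t₀ := by linarith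
  have hτ0 : 0 < t + t₀ := by linarith
  have hL : 0 < Real.log (t + t₀) := Real.log_pos hτ
  have hlog2 := hlog.le.trans (mul_le_mul_of_nonneg_left
    (Real.log_le_log ht₀ (show t₀ ≤ t + t₀ by linarith)) (show 0 ≤ Γ / A by positivity))
  have hposG : ∀ G : ℝ, 0 < C * (max G 0) ^ a / (t + t₀) ^ a → 0 < G := by
    intro G h
    by_contra hG
    rw [max_eq_right (not_lt.1 hG), Real.zero_rpow ha0.ne'] at h
    simp at h
  rcases lt_or_gt_of_ne hrR with hlt | hgt
  · have hUe : ∀ x, x < R₀ → ∀ s, Ulow m μ R₀ t₀ C γ x s =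
        C * (max (γ * (Real.log (s + t₀)) ^ ((1 - μ) / (1 + μ))
            - ((1 - μ) / (2 * A) * x ^ 2 + (1 + μ) / 2 * R₀ ^ (1 - μ))) 0) ^ a
          / (s + t₀) ^ a := by
      intro x hx s
      rw [Ulow, if_neg (not_le.2 hx), sub_sub]
    rw [hUe r hlt] at hU
    have hG := hposG _ hU
    have hsp := aux_space (fun x => (Ulow m μ R₀ t₀ C γ x t) ^ m)
      (fun x => γ * (Real.log (t + t₀)) ^ ((1 - μ) / (1 + μ))
            - ((1 - μ) / (2 * A) * x ^ 2 + (1 + μ) / 2 * R₀ ^ (1 - μ)))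
      (fun x => -((1 - μ) / A * x)) C ((t + t₀) ^ a) a m r (-((1 - μ) / A)) hC (by positivity) ham
      (by
        filter_upwards [Iio_mem_nhds hlt] with x hx
        rw [hUe x hx])
      hG
      (Filter.Eventually.of_forall fun x => by
        have := (((hasDerivAt_pow 2 x).const_mul ((1 - μ) / (2 * A))).add_const
          ((1 + μ) / 2 * R₀ ^ (1 - μ))).const_sub
            (γ * (Real.log (t + t₀)) ^ ((1 - μ) / (1 + μ)))
        refine this.congr_deriv ?_
        simp only [Nat.cast_ofNat, Nat.add_one_sub_one, pow_one]
        field_simp)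
      (((hasDerivAt_id r).const_mul ((1 - μ) / A)).neg.congr_deriv (by ring))
    rw [hsp.1, hsp.2, aux_time (fun s => Ulow m μ R₀ t₀ C γ r s) C a γ ((1 - μ) / (1 + μ))
      ((1 - μ) / (2 * A) * r ^ 2 + (1 + μ) / 2 * R₀ ^ (1 - μ)) t t₀ hC hτ
      (funext fun s => hUe r hlt s) hG]
    refine aux_comb C _ (t + t₀) a m c _ _ _ _ _ hC hτ0 ha0 rfl hcd ham hG ?_
    have hk : N * (ψ' r / ψ r) * r ≤ F := by
      have := hF1 r ⟨hr, hlt⟩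
      refine le_trans (le_of_eq ?_) this
      ring
    have := aux_inner a m c μ Γ γ (Real.log (t + t₀)) A _ F _ r _ R₀ hμ1 hμ2 ha hm hc0 hR₀p hr
      hlt hAd rfl hL hγ hΓ hF hΓ1 hκ hc2 hc3 hk hlog2 rfl (by rw [sub_sub]; exact hG)
    simpa only [sub_sub] using this
  · have hUe : ∀ x, R₀ < x → ∀ s, Ulow m μ R₀ t₀ C γ x s =
        C * (max (γ * (Real.log (s + t₀)) ^ ((1 - μ) / (1 + μ)) - x ^ (1 - μ)) 0) ^ a
          / (s + t₀) ^ a := by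
      intro x hx s
      rw [Ulow, if_pos hx.le]
    rw [hUe r hgt] at hU
    have hG := hposG _ hU
    have hsp := aux_space (fun x => (Ulow m μ R₀ t₀ C γ x t) ^ m)
      (fun x => γ * (Real.log (t + t₀)) ^ ((1 - μ) / (1 + μ)) - x ^ (1 - μ))
      (fun x => -((1 - μ) * x ^ (-μ))) C ((t + t₀) ^ a) a m r ((1 - μ) * μ * r ^ (-μ - 1))
      hC (by positivity) ham
      (by
        filter_upwards [Ioi_mem_nhds hgt] with x hx
        rw [hUe x hx])
      hG
      (by
        filter_upwards [Ioi_mem_nhds hr] with x hx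
        have := (Real.hasDerivAt_rpow_const (x := x) (p := 1 - μ)
          (Or.inl (ne_of_gt hx))).const_sub
            (γ * (Real.log (t + t₀)) ^ ((1 - μ) / (1 + μ)))
        rwa [show 1 - μ - 1 = -μ by ring] at this)
      (by
        have := ((Real.hasDerivAt_rpow_const (x := r) (p := -μ)
          (Or.inl (ne_of_gt hr))).const_mul (1 - μ)).neg
        refine this.congr_deriv ?_
        ring)
    rw [hsp.1, hsp.2, aux_time (fun s => Ulow m μ R₀ t₀ C γ r s) C a γ ((1 - μ) / (1 + μ))
      (r ^ (1 - μ)) t t₀ hC hτ (funext fun s => hUe r hgt s) hG]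
    refine aux_comb C _ (t + t₀) a m c _ _ _ _ _ hC hτ0 ha0 rfl hcd ham hG ?_
    have hk : N * (ψ' r / ψ r) / r ^ μ - μ / r ^ (1 + μ) ≤ N * s := by
      have := hF2 r hgt.le
      refine le_trans (le_of_eq ?_) this
      rw [mul_div_assoc, mul_div_assoc, div_div]
    exact aux_outer a m c μ Γ γ (Real.log (t + t₀)) A N s _ r _ hμ1 hμ2 ha0 m0 hc0
      (by linarith) hs0 hr hA (Real.rpow_le_rpow hR₀p.le hgt.le q2.le) hL hγ hΓ hΓ1 hκ hcs hk
      rfl hG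
end

section
/- Let n ≥ 3 be an integer. Let ψ ∈ 𝒜 satisfy lim_{r→+∞} ψ(r) = +∞, and assume there exists a positive function h ∈ C¹(ℝ) satisfying: (i) lim_{τ→+∞} h'(τ)/h(τ) = 0; (ii) for every function ε : ℝ → ℝ with lim_{τ→+∞} ε(τ) = 0, one has lim_{τ→+∞} h(τ + (1/(n−1))log h(τ) + (1/(n−1))log((n−1)/(n−2)) + ε(τ)) / h(τ) = 1; and (iii) lim_{r→+∞} (log ψ)'(r) / h(log ψ(r)) = 1. Then ∫₁^∞ ψ(t)^{−(n−1)} dt < ∞, so the change of variables s = s(r) defined by 1/((n−2)s^{n−2}) = ∫_r^∞ ψ(t)^{−(n−1)} dt is a well-defined increasing bijection of (0,∞) onto (0,∞) with inverse r = r(s), and the weight ρ(s) := ψ(r(s))^{2(n−1)}/s^{2(n−1)} belongs to ℬ and satisfies: ρ(s) ∼ ((n−2)/(n−1))² / ( s² · [h( ((n−2)/(n−1)) log s )]² ) as s → +∞, and lim_{s→+∞} s ρ'(s)/ρ(s) = −2. -/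
/-- The class `𝒜` of model functions: `ψ ∈ C^∞((0,∞)) ∩ C¹([0,∞))` with `ψ(0) = 0`,
`ψ'(0) = 1` (one-sided derivative) and `ψ > 0` on `(0,∞)`. -/
def classA (ψ : ℝ → ℝ) : Prop :=
  ContDiffOn ℝ (⊤ : ℕ∞) ψ (Set.Ioi 0) ∧ ContDiffOn ℝ 1 ψ (Set.Ici 0) ∧
  ψ 0 = 0 ∧ derivWithin ψ (Set.Ici 0) 0 = 1 ∧ ∀ r > (0 : ℝ), 0 < ψ r

/-- The class `ℬ` of weights: `ρ ∈ C^∞((0,∞))`, positive, extending continuously to `0`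
with value `1`, and with `s ρ'(s) → 0` as `s → 0⁺`. -/
def classB (ρ : ℝ → ℝ) : Prop :=
  ContDiffOn ℝ (⊤ : ℕ∞) ρ (Set.Ioi 0) ∧
  Filter.Tendsto ρ (nhdsWithin 0 (Set.Ioi 0)) (nhds 1) ∧
  Filter.Tendsto (fun s => s * deriv ρ s) (nhdsWithin 0 (Set.Ioi 0)) (nhds 0) ∧
  ∀ s > (0 : ℝ), 0 < ρ s

/-- The change of variables `s = s(r)` determined by
`1/((n-2) s^{n-2}) = ∫_r^∞ ψ(t)^{-(n-1)} dt`, i.e.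
`s(r) = ((n-2) ∫_r^∞ ψ(t)^{-(n-1)} dt)^{-1/(n-2)}`. -/
noncomputable def Svar (n : ℕ) (ψ : ℝ → ℝ) (r : ℝ) : ℝ :=
  (((n : ℝ) - 2) * ∫ t in Set.Ioi r, 1 / ψ t ^ (n - 1)) ^ (-(1 / ((n : ℝ) - 2)))


open Filter Topology Set MeasureTheory

/-- Growth of `m τ + log h τ`. -/
lemma aux_K_top (m : ℕ) (hm : 2 ≤ m) (h : ℝ → ℝ) (hh1 : ContDiff ℝ 1 h) (hhpos : ∀ τ : ℝ, 0 < h τ)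
    (hi : Tendsto (fun τ => deriv h τ / h τ) atTop (𝓝 0)) :
    Tendsto (fun τ => m * τ + Real.log (h τ)) atTop atTop := by
  have hm' : (2:ℝ) ≤ m := by exact_mod_cast hm
  have hev : ∀ᶠ τ in atTop, -1 < deriv h τ / h τ := hi.eventually (lt_mem_nhds (by norm_num))
  obtain ⟨T, hT⟩ := eventually_atTop.1 hev
  have hd : ∀ τ, HasDerivAt (fun τ => m * τ + Real.log (h τ) - τ) (m + deriv h τ / h τ - 1) τ := by
    intro τ
    have h1 : HasDerivAt h (deriv h τ) τ := (hh1.differentiable (by norm_num) τ).hasDerivAt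
    have h2 := h1.log (hhpos τ).ne'
    have h3 : HasDerivAt (fun τ => m * τ + Real.log (h τ) - τ) (m * 1 + deriv h τ / h τ - 1) τ :=
      (((hasDerivAt_id τ).const_mul (m:ℝ)).add h2).sub (hasDerivAt_id τ)
    simpa using h3
  have hmono : MonotoneOn (fun τ => m * τ + Real.log (h τ) - τ) (Ici T) := by
    refine monotoneOn_of_hasDerivWithinAt_nonneg (convex_Ici T)
      (fun y hy => (hd y).continuousAt.continuousWithinAt)
      (fun y hy => (hd y).hasDerivWithinAt) ?_
    intro y hy
    have := hT y (interior_subset hy)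
    linarith
  refine tendsto_atTop_mono' atTop (f₁ := fun τ => (m * T + Real.log (h T) - T) + τ) ?_
    (tendsto_atTop_add_const_left _ _ tendsto_id)
  filter_upwards [eventually_ge_atTop T] with τ hτ
  have := hmono (mem_Ici.2 le_rfl) (mem_Ici.2 hτ) hτ
  simp only at this
  linarith

/-- A version of L'Hopital's rule at `0⁺` for infinite limits. -/
lemma aux_lhopital_inf (f g q e : ℝ → ℝ) (hf : ∀ r > 0, HasDerivAt f (-q r) r)
    (hg : ∀ r > 0, HasDerivAt g (-(q r * e r)) r) (hq : ∀ r > 0, 0 < q r)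
    (he : Tendsto e (𝓝[>] 0) (𝓝 1)) (hgt : Tendsto g (𝓝[>] 0) atTop) :
    Tendsto (fun r => f r / g r) (𝓝[>] 0) (𝓝 1) := by
  rw [Metric.tendsto_nhds]
  intro δ' hδ'
  obtain ⟨δ, hδ, hδ1, hδδ'⟩ : ∃ δ : ℝ, 0 < δ ∧ δ < 1 ∧ 2 * δ ≤ δ' := by
    refine ⟨min (δ'/2) (1/2), by positivity, ?_, ?_⟩
    · exact (min_le_right _ _).trans_lt (by norm_num)
    · have := min_le_left (δ'/2) (1/2); linarith
  have h1 : Tendsto (fun r => (1 + δ) * e r) (𝓝[>] 0) (𝓝 ((1 + δ) * 1)) := he.const_mul _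
  have h2 : Tendsto (fun r => (1 - δ) * e r) (𝓝[>] 0) (𝓝 ((1 - δ) * 1)) := he.const_mul _
  have h1' := h1.eventually (lt_mem_nhds (show 1 < (1 + δ) * 1 by linarith))
  have h2' := h2.eventually (gt_mem_nhds (show (1 - δ) * 1 < 1 by linarith))
  obtain ⟨a, ha, haa⟩ := (mem_nhdsGT_iff_exists_Ioc_subset).1 (h1'.and h2')
  have ha : 0 < a := ha
  have hA : MonotoneOn (fun r => f r - (1 + δ) * g r) (Ioc 0 a) := by
    have hd : ∀ r > 0, HasDerivAt (fun r => f r - (1 + δ) * g r)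
      (-q r - (1 + δ) * (-(q r * e r))) r := fun r hr => (hf r hr).sub ((hg r hr).const_mul _)
    refine monotoneOn_of_hasDerivWithinAt_nonneg (convex_Ioc 0 a)
      (fun y hy => (hd y hy.1).continuousAt.continuousWithinAt)
      (fun y hy => (hd y (interior_subset hy).1).hasDerivWithinAt) ?_
    intro y hy
    have hy := interior_subset hy
    have := (haa hy).1
    have := mul_pos (hq y hy.1) (sub_pos.2 this)
    nlinarith
  have hB : AntitoneOn (fun r => f r - (1 - δ) * g r) (Ioc 0 a) := by
    have hd : ∀ r > 0, HasDerivAt (fun r => f r - (1 - δ) * g r)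
      (-q r - (1 - δ) * (-(q r * e r))) r := fun r hr => (hf r hr).sub ((hg r hr).const_mul _)
    refine antitoneOn_of_hasDerivWithinAt_nonpos (convex_Ioc 0 a)
      (fun y hy => (hd y hy.1).continuousAt.continuousWithinAt)
      (fun y hy => (hd y (interior_subset hy).1).hasDerivWithinAt) ?_
    intro y hy
    have hy := interior_subset hy
    have := (haa hy).2
    have := mul_pos (hq y hy.1) (sub_pos.2 this)
    nlinarith
  set C := |f a - (1 + δ) * g a| + |f a - (1 - δ) * g a| with hC
  have hmem : Ioc 0 a ∈ 𝓝[>] (0:ℝ) := Ioc_mem_nhdsGT ha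
  filter_upwards [hmem, hgt.eventually (eventually_gt_atTop (C / δ)),
    hgt.eventually (eventually_gt_atTop 0)] with r hr hgr hg0
  have e1 := hA hr ⟨ha, le_rfl⟩ hr.2
  have e2 := hB hr ⟨ha, le_rfl⟩ hr.2
  simp only at e1 e2
  have e3 := le_abs_self (f a - (1 + δ) * g a)
  have e4 := neg_abs_le (f a - (1 - δ) * g a)
  have e5 := abs_nonneg (f a - (1 + δ) * g a)
  have e6 := abs_nonneg (f a - (1 - δ) * g a)
  rw [div_lt_iff₀ hδ] at hgr
  have hgδ : 2 * δ * g r ≤ δ' * g r := mul_le_mul_of_nonneg_right hδδ' hg0.le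
  rw [Real.dist_eq, show f r / g r - 1 = (f r - g r) / g r by field_simp, abs_div,
    abs_of_pos hg0, div_lt_iff₀ hg0, abs_lt]
  constructor <;> nlinarith

/-- Reparametrisation by an eventually increasing function. -/
lemma aux_reparam (φ : ℝ → ℝ) (R : ℝ) (hcont : ContinuousOn φ (Ici R))
    (hmono : StrictMonoOn φ (Ici R)) (htop : Tendsto φ atTop atTop) :
    ∃ g : ℝ → ℝ, (∀ r ≥ R, g (φ r) = r) ∧ Tendsto g atTop atTop := by
  have hinv : ∀ r ≥ R, Function.invFunOn φ (Ici R) (φ r) = r := fun r hr =>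
    hmono.injOn.leftInvOn_invFunOn hr
  refine ⟨Function.invFunOn φ (Ici R), hinv, ?_⟩
  rw [tendsto_atTop]
  intro b
  filter_upwards [eventually_ge_atTop (φ (max b R))] with τ hτ
  obtain ⟨c, hc, hcR⟩ := ((htop.eventually (eventually_ge_atTop τ)).and
    (eventually_ge_atTop (max b R))).exists
  have hsub : Icc (max b R) c ⊆ Ici R := fun x hx => (le_max_right b R).trans hx.1
  obtain ⟨r, hr, hrτ⟩ := intermediate_value_Icc hcR (hcont.mono hsub) ⟨hτ, hc⟩
  rw [← hrτ, hinv r (hsub hr)]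
  exact (le_max_left b R).trans hr.1

/-- Smoothness by bootstrapping in `r' = ψ(r)^m / s^m`. -/
lemma aux_smooth (m : ℕ) (ψ r : ℝ → ℝ) (hψ : ContDiffOn ℝ (⊤ : ℕ∞) ψ (Ioi 0))
    (hr0 : ∀ s > 0, 0 < r s)
    (hr : ∀ s > 0, HasDerivAt r (ψ (r s) ^ m / s ^ m) s) :
    ContDiffOn ℝ (⊤ : ℕ∞) r (Ioi 0) := by
  rw [contDiffOn_infty]
  intro k
  induction k with
  | zero =>
    rw [Nat.cast_zero, contDiffOn_zero]
    exact fun s hs => (hr s hs).continuousAt.continuousWithinAt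
  | succ k ih =>
    rw [Nat.cast_succ, contDiffOn_succ_iff_deriv_of_isOpen isOpen_Ioi]
    refine ⟨fun s hs => (hr s hs).differentiableAt.differentiableWithinAt, by simp, ?_⟩
    have : ContDiffOn ℝ k (fun s => ψ (r s) ^ m / s ^ m) (Ioi 0) := by
      refine ContDiffOn.div ?_ (contDiffOn_id.pow m) ?_
      · refine ContDiffOn.pow ?_ m
        exact (contDiffOn_infty.1 hψ k).comp ih (fun s hs => hr0 s hs)
      · intro s hs
        exact pow_ne_zero _ (ne_of_gt hs)
    exact this.congr (fun s hs => (hr s hs).deriv)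

lemma aux_core (m : ℕ) (hm : 2 ≤ m) (ψ : ℝ → ℝ) (hψ : ContDiffOn ℝ (⊤ : ℕ∞) ψ (Ioi 0))
    (hpos : ∀ r > 0, 0 < ψ r) (hψtop : Tendsto ψ atTop atTop)
    (h : ℝ → ℝ) (hh1 : ContDiff ℝ 1 h) (hhpos : ∀ τ : ℝ, 0 < h τ)
    (hi : Tendsto (fun τ => deriv h τ / h τ) atTop (𝓝 0))
    (hiii : Tendsto (fun r => (deriv ψ r / ψ r) / h (Real.log (ψ r))) atTop (𝓝 1)) :
    (∀ r > 0, IntegrableOn (fun t => 1 / ψ t ^ m) (Ioi r)) ∧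
    (∀ r > 0, HasDerivAt (fun r => ∫ t in Ioi r, 1 / ψ t ^ m) (-(1 / ψ r ^ m)) r) ∧
    Tendsto (fun r => ∫ t in Ioi r, 1 / ψ t ^ m) atTop (𝓝 0) ∧
    (∀ r > 0, 0 < ∫ t in Ioi r, 1 / ψ t ^ m) ∧
    Tendsto (fun r => (∫ t in Ioi r, 1 / ψ t ^ m) / (1 / (ψ r ^ m * h (Real.log (ψ r)))))
      atTop (𝓝 (1 / m)) := by
  have hm' : (2:ℝ) ≤ m := by exact_mod_cast hm
  have hd : ∀ r > 0, HasDerivAt ψ (deriv ψ r) r := fun r hr =>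
    ((hψ.differentiableOn (by simp)).differentiableAt (Ioi_mem_nhds hr)).hasDerivAt
  have hlogtop : Tendsto (fun r => Real.log (ψ r)) atTop atTop := Real.tendsto_log_atTop.comp hψtop
  have hqc : ContinuousOn (fun t => 1 / ψ t ^ m) (Ioi 0) := by
    refine ContinuousOn.div continuousOn_const (hψ.continuousOn.pow m) ?_
    intro r hr
    exact (pow_pos (hpos r hr) m).ne'
  have hqpos : ∀ r > 0, 0 < 1 / ψ r ^ m := fun r hr => one_div_pos.2 (pow_pos (hpos r hr) m)
  set c : ℝ → ℝ := fun r => (deriv ψ r / ψ r) / h (Real.log (ψ r)) *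
    (m + deriv h (Real.log (ψ r)) / h (Real.log (ψ r))) with hc
  have hclim : Tendsto c atTop (𝓝 m) := by
    have := hiii.mul ((hi.comp hlogtop).const_add (m:ℝ))
    simpa using this
  set F : ℝ → ℝ := fun r => 1 / (ψ r ^ m * h (Real.log (ψ r))) with hF
  have hFexp : ∀ r > 0, F r = Real.exp (-(m * Real.log (ψ r) + Real.log (h (Real.log (ψ r))))) := by
    intro r hr
    rw [Real.exp_neg, Real.exp_add, Real.exp_log (hhpos _), ← Real.log_pow,
      Real.exp_log (pow_pos (hpos r hr) m), hF]
    simp only [one_div]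
  have hF0 : Tendsto F atTop (𝓝 0) := by
    have h1 := Real.tendsto_exp_neg_atTop_nhds_zero.comp ((aux_K_top m hm h hh1 hhpos hi).comp hlogtop)
    refine h1.congr' ?_
    filter_upwards [eventually_gt_atTop 0] with r hr
    rw [hFexp r hr]; rfl
  have hFd : ∀ r > 0, HasDerivAt F (-(1 / ψ r ^ m * c r)) r := by
    intro r hr
    have hp := hpos r hr
    have hh := hhpos (Real.log (ψ r))
    have hl := (hd r hr).log hp.ne'
    have hhd : HasDerivAt h (deriv h (Real.log (ψ r))) (Real.log (ψ r)) :=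
      (hh1.differentiable (by norm_num) _).hasDerivAt
    have hhl := (hhd.comp r hl).log hh.ne'
    have h1 : HasDerivAt (fun r => Real.exp (-(m * Real.log (ψ r) + Real.log (h (Real.log (ψ r))))))
        _ r := (((hl.const_mul (m:ℝ)).add hhl).neg).exp
    have h2 := h1.congr_of_eventuallyEq (f₁ := F)
      (by filter_upwards [Ioi_mem_nhds hr] with x hx using hFexp x hx)
    refine h2.congr_deriv ?_
    change Real.exp (-(m * Real.log (ψ r) + Real.log (h (Real.log (ψ r))))) *
      -(m * (deriv ψ r / ψ r) + deriv h (Real.log (ψ r)) * (deriv ψ r / ψ r) / h (Real.log (ψ r))) = _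
    rw [← hFexp r hr, hF, hc]
    simp only
    field_simp
  -- integrability near infinity
  have hev : ∀ᶠ r in atTop, 1 < c r := hclim.eventually (lt_mem_nhds (by linarith))
  obtain ⟨R, hR⟩ := eventually_atTop.1 (hev.and (eventually_gt_atTop (0:ℝ)))
  have hR0 : 0 < R := (hR R le_rfl).2
  have hintR : IntegrableOn (fun t => 1 / ψ t ^ m) (Ioi R) := by
    have h1 : IntegrableOn (fun r => -(1 / ψ r ^ m * c r)) (Ioi R) := by
      refine integrableOn_Ioi_deriv_of_nonpos' (fun x hx => hFd x (hR x hx).2) ?_ hF0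
      intro x hx
      have := hR x (le_of_lt hx)
      have h2 := hqpos x this.2
      have : 0 < 1 / ψ x ^ m * c x := mul_pos h2 (by linarith)
      linarith
    refine Integrable.mono' h1.neg
      ((hqc.mono (Ioi_subset_Ioi hR0.le)).aestronglyMeasurable measurableSet_Ioi) ?_
    refine (ae_restrict_iff' measurableSet_Ioi).2 (Eventually.of_forall ?_)
    intro x hx
    have := hR x (le_of_lt hx)
    have h2 := hqpos x this.2
    rw [Real.norm_of_nonneg h2.le]
    simp only [Pi.neg_apply, neg_neg]
    nlinarith
  have hintIcc : ∀ a b, 0 < a → IntegrableOn (fun t => 1 / ψ t ^ m) (Icc a b) := fun a b ha =>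
    (hqc.mono (fun x hx => lt_of_lt_of_le ha hx.1)).integrableOn_Icc
  have hint : ∀ r > 0, IntegrableOn (fun t => 1 / ψ t ^ m) (Ioi r) := by
    intro r hr
    refine ((hintIcc r R hr).union hintR).mono_set ?_
    intro x hx
    rcases le_or_gt x R with h | h
    · exact Or.inl ⟨le_of_lt hx, h⟩
    · exact Or.inr h
  have hI : ∀ r > 0, (∫ t in Ioi r, 1 / ψ t ^ m) =
      (∫ t in Ioi 1, 1 / ψ t ^ m) - ∫ t in (1:ℝ)..r, 1 / ψ t ^ m := by
    intro r hr
    rw [← intervalIntegral.integral_interval_add_Ioi (hint 1 one_pos) (hint r hr)]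
    ring
  have hId : ∀ r > 0, HasDerivAt (fun r => ∫ t in Ioi r, 1 / ψ t ^ m) (-(1 / ψ r ^ m)) r := by
    intro r hr
    have h1 : HasDerivAt (fun u => ∫ t in (1:ℝ)..u, 1 / ψ t ^ m) (1 / ψ r ^ m) r := by
      refine intervalIntegral.integral_hasDerivAt_right ?_ ?_ ?_
      · refine ContinuousOn.intervalIntegrable (hqc.mono ?_)
        intro x hx
        exact lt_of_lt_of_le (lt_min one_pos hr) hx.1
      · exact hqc.stronglyMeasurableAtFilter isOpen_Ioi r hr
      · exact hqc.continuousAt (Ioi_mem_nhds hr)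
    refine (h1.const_sub (∫ t in Ioi 1, 1 / ψ t ^ m)).congr_of_eventuallyEq ?_
    filter_upwards [Ioi_mem_nhds hr] with x hx using hI x hx
  have hI0 : Tendsto (fun r => ∫ t in Ioi r, 1 / ψ t ^ m) atTop (𝓝 0) := by
    have h1 := intervalIntegral_tendsto_integral_Ioi 1 (hint 1 one_pos) tendsto_id
    have h2 := h1.const_sub (∫ t in Ioi 1, 1 / ψ t ^ m)
    rw [sub_self] at h2
    refine h2.congr' ?_
    filter_upwards [eventually_gt_atTop 0] with r hr
    rw [hI r hr]; rfl
  refine ⟨hint, hId, hI0, ?_, ?_⟩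
  · intro r hr
    rw [setIntegral_pos_iff_support_of_nonneg_ae _ (hint r hr)]
    · have : Ioi r ⊆ Function.support (fun t => 1 / ψ t ^ m) ∩ Ioi r := fun x hx =>
        ⟨(hqpos x (lt_trans hr hx)).ne', hx⟩
      exact lt_of_lt_of_le (by simp) (measure_mono this)
    · refine (ae_restrict_iff' measurableSet_Ioi).2 (Eventually.of_forall ?_)
      intro x hx
      exact (hqpos x (lt_trans hr hx)).le
  · refine HasDerivAt.lhopital_zero_atTop_on_Ioi (a := R) (f' := fun r => -(1 / ψ r ^ m))
      (g' := fun r => -(1 / ψ r ^ m * c r))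
      (fun x hx => hId x (hR x (le_of_lt hx)).2) (fun x hx => hFd x (hR x (le_of_lt hx)).2)
      ?_ hI0 hF0 ?_
    · intro x hx
      have h1 := hR x (le_of_lt hx)
      exact neg_ne_zero.2 (mul_pos (hqpos x h1.2) (by linarith)).ne'
    · have h1 : Tendsto (fun r => 1 / c r) atTop (𝓝 (1 / m)) :=
        tendsto_const_nhds.div hclim (by positivity)
      refine h1.congr' ?_
      filter_upwards [eventually_ge_atTop R] with x hx
      have h1 := hR x hx
      have h2 := (hqpos x h1.2).ne'
      have h3 : c x ≠ 0 := by linarith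
      rw [neg_div_neg_eq, div_mul_eq_div_div (1 / ψ x ^ m), div_self h2]

lemma aux_S (m : ℕ) (hm : 2 ≤ m) (ψ S I : ℝ → ℝ)
    (hIpos : ∀ r > 0, 0 < I r) (hId : ∀ r > 0, HasDerivAt I (-(1 / ψ r ^ m)) r)
    (hS : ∀ r, S r = (((m:ℝ) - 1) * I r) ^ (-(1 / ((m:ℝ) - 1)))) :
    (∀ r > 0, 0 < S r) ∧ (∀ r > 0, S r ^ (m - 1) = 1 / (((m:ℝ) - 1) * I r)) ∧
    (∀ r > 0, HasDerivAt S (S r ^ m / ψ r ^ m) r) := by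
  have hm' : (2:ℝ) ≤ m := by exact_mod_cast hm
  have hm1 : (0:ℝ) < (m:ℝ) - 1 := by linarith
  have hu : ∀ r > 0, 0 < ((m:ℝ) - 1) * I r := fun r hr => mul_pos hm1 (hIpos r hr)
  refine ⟨fun r hr => ?_, fun r hr => ?_, fun r hr => ?_⟩
  · rw [hS]; exact Real.rpow_pos_of_pos (hu r hr) _
  · rw [hS, ← Real.rpow_natCast, ← Real.rpow_mul (hu r hr).le, Nat.cast_sub (by omega), Nat.cast_one,
      show -(1 / ((m:ℝ) - 1)) * ((m:ℝ) - 1) = -1 by field_simp, Real.rpow_neg_one, one_div]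
  · have h1 := ((hId r hr).const_mul ((m:ℝ) - 1)).rpow_const (p := -(1 / ((m:ℝ) - 1)))
      (Or.inl (hu r hr).ne')
    have h2 : S = fun r => (((m:ℝ) - 1) * I r) ^ (-(1 / ((m:ℝ) - 1))) := funext hS
    have h3 : S r ^ m = (((m:ℝ) - 1) * I r) ^ (-(1 / ((m:ℝ) - 1)) - 1) := by
      rw [hS, ← Real.rpow_natCast, ← Real.rpow_mul (hu r hr).le]
      congr 1
      field_simp
      ring
    rw [h3, h2]
    convert h1 using 1
    field_simp

lemma aux_zero (m : ℕ) (hm : 2 ≤ m) (ψ S I : ℝ → ℝ) (hψ : ContDiffOn ℝ (⊤ : ℕ∞) ψ (Ioi 0))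
    (hψ1 : ContDiffOn ℝ 1 ψ (Ici 0)) (h0 : ψ 0 = 0) (hd0 : derivWithin ψ (Ici 0) 0 = 1)
    (hpos : ∀ r > 0, 0 < ψ r)
    (hIpos : ∀ r > 0, 0 < I r) (hId : ∀ r > 0, HasDerivAt I (-(1 / ψ r ^ m)) r)
    (hSpos : ∀ r > 0, 0 < S r) (hSI : ∀ r > 0, S r ^ (m - 1) = 1 / (((m:ℝ) - 1) * I r)) :
    Tendsto (deriv ψ) (𝓝[>] 0) (𝓝 1) ∧ Tendsto (fun r => S r / ψ r) (𝓝[>] 0) (𝓝 1) ∧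
    Tendsto S (𝓝[>] 0) (𝓝 0) := by
  have hm' : (2:ℝ) ≤ m := by exact_mod_cast hm
  have hm1 : (0:ℝ) < (m:ℝ) - 1 := by linarith
  have hd : ∀ r > 0, HasDerivAt ψ (deriv ψ r) r := fun r hr =>
    ((hψ.differentiableOn (by simp)).differentiableAt (Ioi_mem_nhds hr)).hasDerivAt
  have hψ0 : Tendsto ψ (𝓝[>] 0) (𝓝 0) := by
    have h1 : ContinuousWithinAt ψ (Ici 0) 0 := hψ1.continuousOn 0 (mem_Ici.2 le_rfl)
    have h2 := h1.tendsto
    rw [h0] at h2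
    exact h2.mono_left (nhdsWithin_mono _ Ioi_subset_Ici_self)
  have hψ0' : Tendsto ψ (𝓝[>] 0) (𝓝[>] 0) :=
    tendsto_nhdsWithin_iff.2 ⟨hψ0, by filter_upwards [self_mem_nhdsWithin] with r hr using hpos r hr⟩
  have hder : Tendsto (deriv ψ) (𝓝[>] 0) (𝓝 1) := by
    have h1 := hψ1.continuousOn_derivWithin (uniqueDiffOn_Ici 0) le_rfl 0 (mem_Ici.2 le_rfl)
    have h2 := h1.tendsto
    rw [hd0] at h2
    refine (h2.mono_left (nhdsWithin_mono _ Ioi_subset_Ici_self)).congr' ?_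
    filter_upwards [self_mem_nhdsWithin] with r hr
    exact derivWithin_of_mem_nhds (Ici_mem_nhds hr)
  set G : ℝ → ℝ := fun r => 1 / (((m:ℝ) - 1) * ψ r ^ (m - 1)) with hG
  have hGd : ∀ r > 0, HasDerivAt G (-(1 / ψ r ^ m * deriv ψ r)) r := by
    intro r hr
    obtain ⟨k, rfl⟩ : ∃ k, m = k + 2 := ⟨m - 2, by omega⟩
    have hp := (hpos r hr).ne'
    have h1 := (((hd r hr).pow (k + 1)).const_mul (((k + 2 : ℕ):ℝ) - 1)).inv
      (mul_pos hm1 (pow_pos (hpos r hr) _)).ne'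
    have h2 : G = (fun y => (((k + 2 : ℕ):ℝ) - 1) * (ψ ^ (k + 1)) y)⁻¹ := by
      funext x
      simp [hG]
    rw [h2]
    refine h1.congr_deriv ?_
    have h3 : ((k + 2 : ℕ):ℝ) - 1 = k + 1 := by push_cast; ring
    rw [h3]
    have h4 : (k:ℝ) + 1 ≠ 0 := by positivity
    simp only [Nat.add_sub_cancel, Pi.pow_apply]
    push_cast
    field_simp
    ring
  have hGtop : Tendsto G (𝓝[>] 0) atTop := by
    have h1 : Tendsto (fun r => ((m:ℝ) - 1) * ψ r ^ (m - 1)) (𝓝[>] 0) (𝓝[>] 0) := by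
      refine tendsto_nhdsWithin_iff.2 ⟨?_, ?_⟩
      · have := (hψ0.pow (m - 1)).const_mul ((m:ℝ) - 1)
        rwa [zero_pow (by omega), mul_zero] at this
      · filter_upwards [self_mem_nhdsWithin] with r hr using mul_pos hm1 (pow_pos (hpos r hr) _)
    refine (tendsto_inv_nhdsGT_zero.comp h1).congr ?_
    intro r
    simp [hG]
  have hIG := aux_lhopital_inf I G (fun r => 1 / ψ r ^ m) (deriv ψ) hId hGd
    (fun r hr => one_div_pos.2 (pow_pos (hpos r hr) m)) hder hGtop
  have hpow : Tendsto (fun r => (S r / ψ r) ^ (m - 1)) (𝓝[>] 0) (𝓝 1) := by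
    have h1 : Tendsto (fun r => 1 / (I r / G r)) (𝓝[>] 0) (𝓝 (1 / 1)) :=
      tendsto_const_nhds.div hIG one_ne_zero
    rw [div_one] at h1
    refine h1.congr' ?_
    filter_upwards [self_mem_nhdsWithin] with r hr
    have hp := (pow_pos (hpos r hr) (m - 1)).ne'
    have hI := (hIpos r hr).ne'
    rw [div_pow, hSI r hr, hG]
    field_simp
  have hSψ : Tendsto (fun r => S r / ψ r) (𝓝[>] 0) (𝓝 1) := by
    have h1 := hpow.rpow_const (p := 1 / ((m - 1 : ℕ) : ℝ)) (Or.inl one_ne_zero)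
    rw [Real.one_rpow] at h1
    refine h1.congr' ?_
    filter_upwards [self_mem_nhdsWithin] with r hr
    rw [one_div]
    exact Real.pow_rpow_inv_natCast (div_pos (hSpos r hr) (hpos r hr)).le (by omega)
  refine ⟨hder, hSψ, ?_⟩
  have h1 := hSψ.mul hψ0
  rw [mul_zero] at h1
  refine h1.congr' ?_
  filter_upwards [self_mem_nhdsWithin] with r hr
  exact div_mul_cancel₀ _ (hpos r hr).ne'

lemma aux_S_top (m : ℕ) (hm : 2 ≤ m) (S I : ℝ → ℝ) (hIpos : ∀ r > 0, 0 < I r)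
    (hI0 : Tendsto I atTop (𝓝 0))
    (hSpos : ∀ r > 0, 0 < S r) (hSI : ∀ r > 0, S r ^ (m - 1) = 1 / (((m:ℝ) - 1) * I r)) :
    Tendsto S atTop atTop := by
  have hm' : (2:ℝ) ≤ m := by exact_mod_cast hm
  have hm1 : (0:ℝ) < (m:ℝ) - 1 := by linarith
  have h1 : Tendsto (fun r => ((m:ℝ) - 1) * I r) atTop (𝓝[>] 0) := by
    refine tendsto_nhdsWithin_iff.2 ⟨by simpa using hI0.const_mul ((m:ℝ) - 1), ?_⟩
    filter_upwards [eventually_gt_atTop 0] with r hr using mul_pos hm1 (hIpos r hr)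
  have h2 : Tendsto (fun r => S r ^ (m - 1)) atTop atTop := by
    refine (tendsto_inv_nhdsGT_zero.comp h1).congr' ?_
    filter_upwards [eventually_gt_atTop 0] with r hr
    rw [hSI r hr, one_div]; rfl
  rw [tendsto_atTop]
  intro b
  filter_upwards [eventually_gt_atTop 0, h2.eventually (eventually_gt_atTop (|b| ^ (m - 1)))]
    with r hr hb
  exact (le_abs_self b).trans (lt_of_pow_lt_pow_left₀ _ (hSpos r hr).le hb).le

/-- Asymptotics at infinity in the variable `r`. -/
lemma aux_top (m : ℕ) (hm : 2 ≤ m) (ψ S I : ℝ → ℝ) (hψ : ContDiffOn ℝ (⊤ : ℕ∞) ψ (Ioi 0))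
    (hpos : ∀ r > 0, 0 < ψ r) (hψtop : Tendsto ψ atTop atTop)
    (h : ℝ → ℝ) (hhpos : ∀ τ : ℝ, 0 < h τ)
    (hii : ∀ ε : ℝ → ℝ, Tendsto ε atTop (𝓝 0) →
      Tendsto (fun τ => h (τ + (1 / (m:ℝ)) * Real.log (h τ)
              + (1 / (m:ℝ)) * Real.log ((m:ℝ) / ((m:ℝ) - 1)) + ε τ) / h τ) atTop (𝓝 1))
    (hiii : Tendsto (fun r => (deriv ψ r / ψ r) / h (Real.log (ψ r))) atTop (𝓝 1))
    (hIpos : ∀ r > 0, 0 < I r)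
    (hIlim : Tendsto (fun r => I r / (1 / (ψ r ^ m * h (Real.log (ψ r))))) atTop (𝓝 (1 / m)))
    (hSpos : ∀ r > 0, 0 < S r) (hSI : ∀ r > 0, S r ^ (m - 1) = 1 / (((m:ℝ) - 1) * I r)) :
    Tendsto (fun r => deriv ψ r * ψ r ^ (m - 1) / S r ^ (m - 1)) atTop (𝓝 (((m:ℝ) - 1) / m)) ∧
    Tendsto (fun r => (ψ r ^ (2 * m) / S r ^ (2 * m)) /
            ((((m : ℝ) - 1) / m) ^ 2 /
              (S r ^ 2 * (h (((m : ℝ) - 1) / m * Real.log (S r))) ^ 2))) atTop (𝓝 1) := by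
  have hm' : (2:ℝ) ≤ m := by exact_mod_cast hm
  have hm1 : (0:ℝ) < (m:ℝ) - 1 := by linarith
  have hm0 : (0:ℝ) < m := by linarith
  have hd : ∀ r > 0, HasDerivAt ψ (deriv ψ r) r := fun r hr =>
    ((hψ.differentiableOn (by simp)).differentiableAt (Ioi_mem_nhds hr)).hasDerivAt
  have hlogtop : Tendsto (fun r => Real.log (ψ r)) atTop atTop := Real.tendsto_log_atTop.comp hψtop
  set A : ℝ → ℝ := fun r => S r ^ (m - 1) / (ψ r ^ m * h (Real.log (ψ r))) with hA
  have hApos : ∀ r > 0, 0 < A r := fun r hr =>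
    div_pos (pow_pos (hSpos r hr) _) (mul_pos (pow_pos (hpos r hr) _) (hhpos _))
  have hAlim : Tendsto A atTop (𝓝 ((m:ℝ) / ((m:ℝ) - 1))) := by
    have h1 : Tendsto (fun r => 1 / (((m:ℝ) - 1) * (I r / (1 / (ψ r ^ m * h (Real.log (ψ r)))))))
        atTop (𝓝 (1 / (((m:ℝ) - 1) * (1 / m)))) :=
      tendsto_const_nhds.div (hIlim.const_mul _) (by positivity)
    rw [show 1 / (((m:ℝ) - 1) * (1 / m)) = (m:ℝ) / ((m:ℝ) - 1) by field_simp] at h1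
    refine h1.congr' ?_
    filter_upwards [eventually_gt_atTop 0] with r hr
    have e1 := (pow_pos (hpos r hr) m).ne'
    have e2 := (hhpos (Real.log (ψ r))).ne'
    have e3 := (hIpos r hr).ne'
    simp only [hA]
    rw [hSI r hr]
    field_simp
  constructor
  · have h1 := hiii.div hAlim (by positivity)
    rw [one_div_div] at h1
    refine h1.congr' ?_
    filter_upwards [eventually_gt_atTop 0] with r hr
    have e1 := (hpos r hr).ne'
    have e2 := (hhpos (Real.log (ψ r))).ne'
    have e3 := (hSpos r hr).ne'
    simp only [hA, Pi.div_apply]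
    have e4 : ψ r ^ m = ψ r ^ (m - 1) * ψ r := (pow_sub_one_mul (by omega) _).symm
    rw [e4]
    field_simp
  -- eventual monotonicity
  have hev := (hiii.eventually (lt_mem_nhds (show (0:ℝ) < 1 by norm_num))).and
    (eventually_gt_atTop (0:ℝ))
  obtain ⟨R, hR⟩ := eventually_atTop.1 hev
  have hld : ∀ r ≥ R, HasDerivAt (fun r => Real.log (ψ r)) (deriv ψ r / ψ r) r := fun r hr =>
    (hd r (hR r hr).2).log (hpos r (hR r hr).2).ne'
  have hlc : ContinuousOn (fun r => Real.log (ψ r)) (Ici R) :=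
    fun r hr => (hld r hr).continuousAt.continuousWithinAt
  have hlm : StrictMonoOn (fun r => Real.log (ψ r)) (Ici R) := by
    refine strictMonoOn_of_deriv_pos (convex_Ici R) hlc ?_
    intro r hr
    have hr := interior_subset hr
    rw [(hld r hr).deriv]
    have := mul_pos (hR r hr).1 (hhpos (Real.log (ψ r)))
    rwa [div_mul_cancel₀ _ (hhpos _).ne'] at this
  obtain ⟨g, hg, hgtop⟩ := aux_reparam _ R hlc hlm hlogtop
  set e : ℝ → ℝ := fun r => (1 / (m:ℝ)) * (Real.log (A r) - Real.log ((m:ℝ) / ((m:ℝ) - 1))) with he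
  have helim : Tendsto e atTop (𝓝 0) := by
    have h1 := hAlim.log (by positivity)
    have h2 := (h1.sub_const (Real.log ((m:ℝ) / ((m:ℝ) - 1)))).const_mul (1 / (m:ℝ))
    rwa [sub_self, mul_zero] at h2
  have hH : Tendsto (fun r => h (((m : ℝ) - 1) / m * Real.log (S r)) / h (Real.log (ψ r)))
      atTop (𝓝 1) := by
    refine ((hii (e ∘ g) (helim.comp hgtop)).comp hlogtop).congr' ?_
    filter_upwards [eventually_ge_atTop R] with r hr
    have hr0 := (hR r hr).2
    simp only [Function.comp_apply]
    rw [hg r hr]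
    congr 2
    have e1 : ((m - 1 : ℕ) : ℝ) * Real.log (S r) =
        Real.log (A r) + (m * Real.log (ψ r) + Real.log (h (Real.log (ψ r)))) := by
      rw [← Real.log_pow, ← Real.log_pow,
        ← Real.log_mul (pow_pos (hpos r hr0) _).ne' (hhpos _).ne',
        ← Real.log_mul (hApos r hr0).ne' (mul_pos (pow_pos (hpos r hr0) _) (hhpos _)).ne', hA]
      simp only
      rw [div_mul_cancel₀ _ (mul_pos (pow_pos (hpos r hr0) _) (hhpos _)).ne']
    rw [Nat.cast_sub (by omega), Nat.cast_one] at e1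
    rw [div_mul_eq_mul_div ((m:ℝ) - 1), e1, he]
    field_simp
    ring
  have h1 := ((hH.div hAlim (by positivity)).div_const (((m:ℝ) - 1) / m)).pow 2
  rw [show (1 / ((m:ℝ) / ((m:ℝ) - 1)) / (((m:ℝ) - 1) / m)) ^ 2 = 1 by field_simp] at h1
  refine h1.congr' ?_
  filter_upwards [eventually_gt_atTop 0] with r hr
  have e1 := (hpos r hr).ne'
  have e2 := (hhpos (Real.log (ψ r))).ne'
  have e3 := (hSpos r hr).ne'
  have e5 := (hhpos (((m : ℝ) - 1) / m * Real.log (S r))).ne'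
  simp only [hA, Pi.div_apply]
  have e4 : S r ^ (2 * m) = (S r ^ (m - 1) * S r) ^ 2 := by
    rw [pow_sub_one_mul (by omega), ← pow_mul, mul_comm]
  have e6 : ψ r ^ (2 * m) = (ψ r ^ m) ^ 2 := by rw [← pow_mul, mul_comm]
  rw [e4, e6]
  field_simp

/-- Theorem 7.1 of the paper, direct part. For `n ≥ 3` and `ψ ∈ 𝒜`
with `ψ → +∞`, admitting `h ∈ C¹(ℝ)` positive with `h'/h → 0`, the scaling-invariance
property (ii), and `(log ψ)'(r)/h(log ψ(r)) → 1`, the change of variables is a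
well-defined increasing bijection of `(0,∞)` onto itself and the associated weight
`ρ(s) = ψ(r(s))^{2(n-1)}/s^{2(n-1)}` belongs to `ℬ` and satisfies
`ρ(s) ∼ ((n-2)/(n-1))² / (s² h(((n-2)/(n-1)) log s)²)` and `s ρ'(s)/ρ(s) → -2`. -/
theorem stmt_7
    (n : ℕ) (hn : 3 ≤ n) (ψ : ℝ → ℝ) (hψA : classA ψ)
    (hψtop : Filter.Tendsto ψ Filter.atTop Filter.atTop)
    (h : ℝ → ℝ) (hh1 : ContDiff ℝ 1 h) (hhpos : ∀ τ : ℝ, 0 < h τ)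
    (hi : Filter.Tendsto (fun τ => deriv h τ / h τ) Filter.atTop (nhds 0))
    (hii : ∀ ε : ℝ → ℝ, Filter.Tendsto ε Filter.atTop (nhds 0) →
      Filter.Tendsto (fun τ =>
          h (τ + (1 / ((n : ℝ) - 1)) * Real.log (h τ)
              + (1 / ((n : ℝ) - 1)) * Real.log (((n : ℝ) - 1) / ((n : ℝ) - 2)) + ε τ)
            / h τ)
        Filter.atTop (nhds 1))
    (hiii : Filter.Tendsto (fun r => (deriv ψ r / ψ r) / h (Real.log (ψ r)))
      Filter.atTop (nhds 1)) :
    MeasureTheory.IntegrableOn (fun t => 1 / ψ t ^ (n - 1)) (Set.Ioi 1) ∧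
    StrictMonoOn (Svar n ψ) (Set.Ioi 0) ∧
    Set.BijOn (Svar n ψ) (Set.Ioi 0) (Set.Ioi 0) ∧
    ∃ rOf : ℝ → ℝ,
      (∀ r > (0 : ℝ), rOf (Svar n ψ r) = r) ∧
      (∀ s > (0 : ℝ), Svar n ψ (rOf s) = s) ∧
      classB (fun s => ψ (rOf s) ^ (2 * (n - 1)) / s ^ (2 * (n - 1))) ∧
      Filter.Tendsto (fun s =>
          (ψ (rOf s) ^ (2 * (n - 1)) / s ^ (2 * (n - 1))) /
            ((((n : ℝ) - 2) / ((n : ℝ) - 1)) ^ 2 /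
              (s ^ 2 * (h (((n : ℝ) - 2) / ((n : ℝ) - 1) * Real.log s)) ^ 2)))
        Filter.atTop (nhds 1) ∧
      Filter.Tendsto (fun s =>
          s * deriv (fun σ => ψ (rOf σ) ^ (2 * (n - 1)) / σ ^ (2 * (n - 1))) s /
            (ψ (rOf s) ^ (2 * (n - 1)) / s ^ (2 * (n - 1))))
        Filter.atTop (nhds (-2)) := by
  obtain ⟨m, rfl⟩ : ∃ m, n = m + 1 := ⟨n - 1, by omega⟩
  have hm : 2 ≤ m := by omega
  have hm' : (2:ℝ) ≤ m := by exact_mod_cast hm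
  have hm1 : (0:ℝ) < (m:ℝ) - 1 := by linarith
  have hm0 : (0:ℝ) < m := by linarith
  have c2 : ((m + 1 : ℕ) : ℝ) - 2 = m - 1 := by push_cast; ring
  have c1 : ((m + 1 : ℕ) : ℝ) - 1 = m := by push_cast; ring
  obtain ⟨hψ, hψ1, h0, hd0, hpos⟩ := hψA
  have hSdef : ∀ r, Svar (m + 1) ψ r =
      (((m:ℝ) - 1) * ∫ t in Ioi r, 1 / ψ t ^ m) ^ (-(1 / ((m:ℝ) - 1))) := by
    intro r
    rw [Svar, c2, Nat.add_sub_cancel]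
  simp only [c1, c2] at hii ⊢
  simp only [Nat.add_sub_cancel]
  obtain ⟨hint, hId, hI0, hIpos, hIlim⟩ :=
    aux_core m hm ψ hψ hpos hψtop h hh1 hhpos hi hiii
  generalize Svar (m + 1) ψ = S at *
  obtain ⟨hSpos, hSI, hSd⟩ := aux_S m hm ψ S _ hIpos hId hSdef
  obtain ⟨hψ'0, hSψ, hS0⟩ := aux_zero m hm ψ S _ hψ hψ1 h0 hd0 hpos hIpos hId hSpos hSI
  have hStop := aux_S_top m hm S _ hIpos hI0 hSpos hSI
  obtain ⟨hB, hmain⟩ := aux_top m hm ψ S _ hψ hpos hψtop h hhpos hii hiii hIpos hIlim hSpos hSI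
  have hd : ∀ r > 0, HasDerivAt ψ (deriv ψ r) r := fun r hr =>
    ((hψ.differentiableOn (by simp)).differentiableAt (Ioi_mem_nhds hr)).hasDerivAt
  have hSc : ContinuousOn S (Ioi 0) := fun r hr => (hSd r hr).continuousAt.continuousWithinAt
  have hSd' : ∀ r > 0, 0 < S r ^ m / ψ r ^ m := fun r hr =>
    div_pos (pow_pos (hSpos r hr) _) (pow_pos (hpos r hr) _)
  have hSm : StrictMonoOn S (Ioi 0) := by
    refine strictMonoOn_of_deriv_pos (convex_Ioi 0) hSc ?_
    intro r hr
    have hr := interior_subset hr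
    rw [(hSd r hr).deriv]
    exact hSd' r hr
  have hsurj : SurjOn S (Ioi 0) (Ioi 0) := by
    intro s hs
    obtain ⟨a, ha, ha0⟩ := ((hS0.eventually (gt_mem_nhds hs)).and self_mem_nhdsWithin).exists
    obtain ⟨b, hb, hb0⟩ := ((hStop.eventually (eventually_gt_atTop s)).and
      (eventually_gt_atTop 0)).exists
    exact isPreconnected_Ioi.intermediate_value ha0 hb0 hSc ⟨ha.le, hb.le⟩
  have hbij : BijOn S (Ioi 0) (Ioi 0) := ⟨fun r hr => hSpos r hr, hSm.injOn, hsurj⟩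
  refine ⟨hint 1 one_pos, hSm, hbij, Function.invFunOn S (Ioi 0), ?_⟩
  have hL : ∀ r > 0, Function.invFunOn S (Ioi 0) (S r) = r := fun r hr =>
    hSm.injOn.leftInvOn_invFunOn hr
  have hRi : ∀ s > 0, S (Function.invFunOn S (Ioi 0) s) = s := fun s hs =>
    hsurj.rightInvOn_invFunOn hs
  have hr0 : ∀ s > 0, 0 < Function.invFunOn S (Ioi 0) s := fun s hs =>
    hsurj.mapsTo_invFunOn hs
  generalize Function.invFunOn S (Ioi 0) = ro at *
  have hrm : StrictMonoOn ro (Ioi 0) := by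
    intro a ha b hb hab
    rw [← hSm.lt_iff_lt (hr0 a ha) (hr0 b hb), hRi a ha, hRi b hb]
    exact hab
  have hrd : ∀ s > 0, HasDerivAt ro (ψ (ro s) ^ m / s ^ m) s := by
    intro s hs
    have himg : ro '' Ioi 0 ∈ 𝓝 (ro s) := by
      refine mem_of_superset (Ioi_mem_nhds (hr0 s hs)) ?_
      intro r hr
      exact ⟨S r, hSpos r hr, hL r hr⟩
    have hc := hrm.continuousAt_of_image_mem_nhds (Ioi_mem_nhds hs) himg
    have h1 := HasDerivAt.of_local_left_inverse hc (hSd _ (hr0 s hs)) (hSd' _ (hr0 s hs)).ne'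
      (by filter_upwards [Ioi_mem_nhds hs] with y hy using hRi y hy)
    rwa [inv_div, hRi s hs] at h1
  have hrs := aux_smooth m ψ ro hψ hr0 hrd
  have hrtop : Tendsto ro atTop atTop := by
    rw [tendsto_atTop]
    intro b
    have hb : 0 < max b 1 := lt_max_of_lt_right one_pos
    filter_upwards [eventually_ge_atTop (S (max b 1))] with s hs
    have hs0 : 0 < s := (hSpos _ hb).trans_le hs
    refine (le_max_left b 1).trans ?_
    rw [← hSm.le_iff_le hb (hr0 s hs0), hRi s hs0]
    exact hs
  have hrzero : Tendsto ro (𝓝[>] 0) (𝓝[>] 0) := by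
    refine tendsto_nhdsWithin_iff.2
      ⟨?_, by filter_upwards [self_mem_nhdsWithin] with s hs using hr0 s hs⟩
    rw [Metric.tendsto_nhds]
    intro b hb
    filter_upwards [Ioo_mem_nhdsGT (hSpos b hb)] with s hs
    rw [Real.dist_eq, sub_zero, abs_of_pos (hr0 s hs.1), ← hSm.lt_iff_lt (hr0 s hs.1) hb,
      hRi s hs.1]
    exact hs.2
  set B : ℝ → ℝ := fun r => deriv ψ r * ψ r ^ (m - 1) / S r ^ (m - 1) with hBdef
  set ρ : ℝ → ℝ := fun s => ψ (ro s) ^ (2 * m) / s ^ (2 * m) with hρ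
  have hρpos : ∀ s > 0, 0 < ρ s := fun s hs =>
    div_pos (pow_pos (hpos _ (hr0 s hs)) _) (pow_pos hs _)
  have hρd : ∀ s > 0, s * deriv ρ s = ρ s * (2 * m * (B (ro s) - 1)) := by
    intro s hs
    have e1 := hpos _ (hr0 s hs)
    have h1 : HasDerivAt (fun s => ψ (ro s)) (deriv ψ (ro s) * (ψ (ro s) ^ m / s ^ m)) s :=
      (hd _ (hr0 s hs)).comp s (hrd s hs)
    have h2 : HasDerivAt ρ _ s :=
      (h1.fun_pow (2 * m)).fun_div ((hasDerivAt_id' s).fun_pow (2 * m)) (pow_pos hs _).ne'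
    rw [h2.deriv]
    simp only [hρ, hBdef, hRi s hs]
    obtain ⟨k, rfl⟩ : ∃ k, m = k + 1 := ⟨m - 1, by omega⟩
    have e2 : 2 * (k + 1) - 1 = 2 * k + 1 := by omega
    have e3 : 2 * (k + 1) = 2 * k + 2 := by omega
    rw [e2, Nat.add_sub_cancel]
    simp only [e3]
    push_cast
    have hs' : s ≠ 0 := ne_of_gt hs
    generalize ψ (ro s) = y at *
    have e1' := e1.ne'
    field_simp
    ring
  have hρ1 : Tendsto ρ (𝓝[>] 0) (𝓝 1) := by
    have h1 : Tendsto (fun r => (1 / (S r / ψ r)) ^ (2 * m)) (𝓝[>] 0) (𝓝 ((1 / 1) ^ (2 * m))) :=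
      (tendsto_const_nhds.div hSψ one_ne_zero).pow _
    rw [div_one, one_pow] at h1
    refine (h1.comp hrzero).congr' ?_
    filter_upwards [self_mem_nhdsWithin] with s hs
    simp only [Function.comp_apply, hρ]
    rw [hRi s hs, one_div_div, div_pow]
  refine ⟨hL, hRi, ⟨?_, hρ1, ?_, hρpos⟩, ?_, ?_⟩
  · refine ContDiffOn.div ?_ (contDiffOn_id.pow _) ?_
    · exact (hψ.comp hrs (fun s hs => hr0 s hs)).pow _
    · intro s hs
      exact pow_ne_zero _ (ne_of_gt hs)
  · have hB0 : Tendsto B (𝓝[>] 0) (𝓝 1) := by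
      have h1 : Tendsto (fun r => deriv ψ r * (1 / (S r / ψ r)) ^ (m - 1)) (𝓝[>] 0)
          (𝓝 (1 * (1 / 1) ^ (m - 1))) :=
        hψ'0.mul ((tendsto_const_nhds.div hSψ one_ne_zero).pow _)
      rw [div_one, one_pow, mul_one] at h1
      refine h1.congr ?_
      intro r
      simp only [hBdef]
      rw [one_div_div, div_pow, mul_div_assoc]
    have h1 := hρ1.mul (((hB0.comp hrzero).sub_const 1).const_mul (2 * (m:ℝ)))
    rw [sub_self, mul_zero, mul_zero] at h1
    refine h1.congr' ?_
    filter_upwards [self_mem_nhdsWithin] with s hs using (hρd s hs).symm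
  · refine (hmain.comp hrtop).congr' ?_
    filter_upwards [eventually_gt_atTop 0] with s hs
    simp only [Function.comp_apply]
    rw [hRi s hs]
  · have h1 := ((hB.comp hrtop).sub_const 1).const_mul (2 * (m:ℝ))
    rw [show 2 * (m:ℝ) * (((m:ℝ) - 1) / m - 1) = -2 by field_simp; ring] at h1
    refine h1.congr' ?_
    filter_upwards [eventually_gt_atTop 0] with s hs
    change _ = s * deriv ρ s / ρ s
    rw [hρd s hs, mul_div_cancel_left₀ _ (hρpos s hs).ne']
    rfl
end

section
/- Let n ≥ 3 be an integer. Let h ∈ C¹(ℝ) be a positive function satisfying: (i) lim_{τ→+∞} h'(τ)/h(τ) = 0; (ii) for every function ε : ℝ → ℝ with lim_{τ→+∞} ε(τ) = 0, one has lim_{τ→+∞} h(τ + (1/(n−1))log h(τ) + (1/(n−1))log((n−1)/(n−2)) + ε(τ)) / h(τ) = 1; and (iii) ∫₁^∞ dτ/h(τ) = +∞. Let ρ ∈ ℬ satisfy lim_{s→+∞} s ρ'(s)/ρ(s) = −2 and ρ(s) ∼ ((n−2)/(n−1))² / ( s² · [h( ((n−2)/(n−1)) log s )]² ) as s → +∞.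 Define r = g(s) := ∫₀^s ρ(τ)^{1/2} dτ for s ≥ 0 (an increasing bijection of [0,∞) onto [0,∞)), and ψ(r) := g^{−1}(r) · ρ(g^{−1}(r))^{1/(2(n−1))} for r > 0. Then ψ ∈ 𝒜, lim_{r→+∞} ψ(r) = +∞, and lim_{r→+∞} (log ψ)'(r) / h(log ψ(r)) = 1. -/
section Aux
open Filter Topology Set

lemma aux_slow (h : ℝ → ℝ) (hh1 : ContDiff ℝ 1 h) (hhpos : ∀ τ : ℝ, 0 < h τ)
    (hi : Tendsto (fun τ => deriv h τ / h τ) atTop (𝓝 0))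
    {ι : Type*} {l : Filter ι} (u v : ι → ℝ) (hu : Tendsto u l atTop) (hv : Tendsto v l atTop)
    (huv : Tendsto (fun x => u x - v x) l (𝓝 0)) :
    Tendsto (fun x => h (u x) / h (v x)) l (𝓝 1) := by
  have hd : ∀ x, HasDerivAt (fun t => Real.log (h t)) (deriv h x / h x) x := fun x =>
    ((hh1.differentiable (by norm_num)) x).hasDerivAt.log (hhpos x).ne'
  have h1 : ∀ᶠ τ in atTop, |deriv h τ / h τ| ≤ 1 := by
    have := (hi.abs).eventually (ge_mem_nhds (show |(0:ℝ)| < 1 by simp))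
    exact this
  obtain ⟨x0, hx0⟩ := eventually_atTop.1 h1
  have key : Tendsto (fun x => Real.log (h (u x)) - Real.log (h (v x))) l (𝓝 0) := by
    apply squeeze_zero_norm' _ (by simpa using huv.norm)
    filter_upwards [hu.eventually_ge_atTop x0, hv.eventually_ge_atTop x0] with x hx hx'
    have := (convex_Ici x0).norm_image_sub_le_of_norm_hasDerivWithin_le (C := 1)
      (f := fun t => Real.log (h t)) (f' := fun x => deriv h x / h x)
      (fun y _ => (hd y).hasDerivWithinAt) (fun y hy => hx0 y hy) (x := v x) (y := u x) hx' hx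
    simpa using this
  have h2 := (Real.continuous_exp.tendsto 0).comp key
  rw [Real.exp_zero] at h2
  refine h2.congr fun x => ?_
  simp [Real.exp_sub, Real.exp_log (hhpos _)]

lemma aux_inv (F F' : ℝ → ℝ) (hF : ∀ x, HasDerivAt F (F' x) x) (hF' : Tendsto F' atTop (𝓝 1)) :
    ∃ σ : ℝ → ℝ, Tendsto σ atTop atTop ∧ ∀ᶠ τ in atTop, F (σ τ) = τ := by
  have e1 : ∀ᶠ x in atTop, 1/2 ≤ F' x := hF'.eventually (le_mem_nhds (by norm_num))
  have e2 : ∀ᶠ x in atTop, F' x ≤ 2 := hF'.eventually (ge_mem_nhds (by norm_num))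
  obtain ⟨x0, hx0⟩ := eventually_atTop.1 (e1.and e2)
  have hdiff : Differentiable ℝ F := fun x => (hF x).differentiableAt
  have hc : Continuous F := hdiff.continuous
  have hlow : ∀ x, x0 ≤ x → 1/2 * (x - x0) ≤ F x - F x0 := fun x hx =>
    (convex_Ici x0).mul_sub_le_image_sub_of_le_deriv hc.continuousOn hdiff.differentiableOn
      (fun y hy => by
        rw [(hF y).deriv]; exact (hx0 y (interior_subset hy)).1) x0 self_mem_Ici x hx hx
  have hup : ∀ x, x0 ≤ x → F x - F x0 ≤ 2 * (x - x0) := fun x hx =>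
    (convex_Ici x0).image_sub_le_mul_sub_of_deriv_le hc.continuousOn hdiff.differentiableOn
      (fun y hy => by
        rw [(hF y).deriv]; exact (hx0 y (interior_subset hy)).2) x0 self_mem_Ici x hx hx
  have hex : ∀ τ, ∃ x, F x0 ≤ τ → x0 ≤ x ∧ F x = τ := by
    intro τ
    by_cases hτ : F x0 ≤ τ
    · have hx : x0 ≤ x0 + 2 * (τ - F x0) := by linarith
      have := hlow _ hx
      obtain ⟨x, hx1, hx2⟩ := intermediate_value_Icc hx hc.continuousOn
        (show τ ∈ Icc (F x0) (F (x0 + 2 * (τ - F x0))) from ⟨hτ, by linarith⟩)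
      exact ⟨x, fun _ => ⟨hx1.1, hx2⟩⟩
    · exact ⟨0, fun h => absurd h hτ⟩
  choose σ hσ using hex
  refine ⟨σ, ?_, ?_⟩
  · refine tendsto_atTop_mono' atTop (f₁ := fun τ => x0 + (τ - F x0) / 2) ?_ ?_
    · filter_upwards [eventually_ge_atTop (F x0)] with τ hτ
      have := hup _ (hσ τ hτ).1
      rw [(hσ τ hτ).2] at this
      linarith
    · apply tendsto_atTop_add_const_left
      apply Tendsto.atTop_div_const (by norm_num)
      exact tendsto_atTop_add_const_right _ _ tendsto_id
  · filter_upwards [eventually_ge_atTop (F x0)] with τ hτ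
    exact (hσ τ hτ).2

lemma aux_h (h : ℝ → ℝ) (hh1 : ContDiff ℝ 1 h) (hhpos : ∀ τ : ℝ, 0 < h τ)
    (hi : Tendsto (fun τ => deriv h τ / h τ) atTop (𝓝 0)) (k C : ℝ)
    (hii : Tendsto (fun τ => h (τ + k * Real.log (h τ) + C) / h τ) atTop (𝓝 1))
    {ι : Type*} {l : Filter ι} (u t : ι → ℝ) (ht : Tendsto t l atTop)
    (hut : Tendsto (fun x => u x - (t x - k * Real.log (h (t x)) - C)) l (𝓝 0)) :
    Tendsto u l atTop ∧ Tendsto (fun x => h (t x) / h (u x)) l (𝓝 1) := by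
  have hd : ∀ x, HasDerivAt (fun t => t + k * Real.log (h t) + C) (1 + k * (deriv h x / h x)) x :=
    fun x => (((hasDerivAt_id x).add ((((hh1.differentiable (by norm_num)) x).hasDerivAt.log
      (hhpos x).ne').const_mul k)).add_const C)
  obtain ⟨σ, hσ1, hσ2⟩ := aux_inv _ _ hd (by simpa using (hi.const_mul k).const_add 1)
  have hst : Tendsto (fun x => σ (t x)) l atTop := hσ1.comp ht
  have h1 : Tendsto (fun x => h (t x) / h (σ (t x))) l (𝓝 1) := by
    refine (hii.comp hst).congr' ?_
    filter_upwards [ht.eventually hσ2] with x hx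
    simp only [Function.comp]
    rw [hx]
  have h2 : Tendsto (fun x => Real.log (h (t x)) - Real.log (h (σ (t x)))) l (𝓝 0) := by
    have := ((Real.continuousAt_log one_ne_zero).tendsto).comp h1
    rw [Real.log_one] at this
    exact this.congr fun x => Real.log_div (hhpos _).ne' (hhpos _).ne'
  have h3 : Tendsto (fun x => u x - σ (t x)) l (𝓝 0) := by
    have := hut.sub (h2.const_mul k)
    simp only [mul_zero, sub_zero] at this
    refine this.congr' ?_
    filter_upwards [ht.eventually hσ2] with x hx
    linarith
  have hu : Tendsto u l atTop := by
    have := tendsto_atTop_add_left_of_le' (f := fun x => u x - σ (t x)) (g := fun x => σ (t x)) l (-1)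
      (h3.eventually (le_mem_nhds (by norm_num))) hst
    simpa using this
  refine ⟨hu, ?_⟩
  have h4 := aux_slow h hh1 hhpos hi (fun x => σ (t x)) u hst hu (by
    simpa using h3.neg)
  have := h1.mul h4
  rw [one_mul] at this
  refine this.congr fun x => ?_
  field_simp [(hhpos (σ (t x))).ne', (hhpos (u x)).ne']

lemma aux_div (h : ℝ → ℝ) (hh1 : ContDiff ℝ 1 h) (hhpos : ∀ τ : ℝ, 0 < h τ)
    (hint : ¬ MeasureTheory.IntegrableOn (fun τ => 1 / h τ) (Set.Ioi 1))
    (c : ℝ) (hc : 0 < c) (G G' : ℝ → ℝ) (hG : ∀ s, HasDerivAt G (G' s) s) (hmono : Monotone G)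
    (hm : Tendsto (fun s => s * G' s * h (c * Real.log s) / c) atTop (𝓝 1)) :
    Tendsto G atTop atTop := by
  rcases tendsto_atTop_of_monotone hmono with H | ⟨L, hL⟩
  · exact H
  exfalso
  have hexp : Tendsto (fun τ : ℝ => Real.exp (τ / c)) atTop atTop :=
    Real.tendsto_exp_atTop.comp (tendsto_id.atTop_div_const hc)
  have hL' : Tendsto (fun τ : ℝ => G (Real.exp (τ / c))) atTop (𝓝 L) := hL.comp hexp
  have hd : ∀ τ, HasDerivAt (fun τ : ℝ => G (Real.exp (τ / c)))
      (G' (Real.exp (τ / c)) * (Real.exp (τ / c) * (1 / c))) τ := fun τ =>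
    (hG _).comp τ (((hasDerivAt_id τ).div_const c).exp)
  have e := (hm.comp hexp).eventually (le_mem_nhds (show (1/2 : ℝ) < 1 by norm_num))
  obtain ⟨T, hT⟩ := eventually_atTop.1 e
  have hb : ∀ τ, T ≤ τ → 1 / h τ ≤ 2 * (G' (Real.exp (τ / c)) * (Real.exp (τ / c) * (1 / c))) := by
    intro τ hτ
    have := hT τ hτ
    simp only [Function.comp, Real.log_exp] at this
    rw [mul_div_cancel₀ _ hc.ne'] at this
    rw [div_le_iff₀ (hhpos τ)]
    calc (1:ℝ) = 2 * (1/2) := by norm_num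
      _ ≤ 2 * (Real.exp (τ / c) * G' (Real.exp (τ / c)) * h τ / c) := by linarith
      _ = _ := by ring
  have hpos : ∀ τ, 0 < 1 / h τ := fun τ => one_div_pos.2 (hhpos τ)
  have hI := MeasureTheory.integrableOn_Ioi_deriv_of_nonneg' (a := T) (fun x _ => hd x)
    (fun x hx => by have := hb x (le_of_lt hx); have := hpos x; linarith) hL'
  have hcont : Continuous (fun τ => 1 / h τ) :=
    continuous_const.div hh1.continuous fun x => (hhpos x).ne'
  have hI2 : MeasureTheory.IntegrableOn (fun τ => 1 / h τ) (Ioi T) := by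
    refine MeasureTheory.Integrable.mono' (hI.const_mul 2) hcont.aestronglyMeasurable ?_
    filter_upwards [MeasureTheory.ae_restrict_mem measurableSet_Ioi] with x hx
    rw [Real.norm_of_nonneg (hpos x).le]
    exact hb x (le_of_lt hx)
  apply hint
  have hI3 : MeasureTheory.IntegrableOn (fun τ => 1 / h τ) (Icc 1 T) :=
    hcont.continuousOn.integrableOn_Icc
  refine (hI3.union hI2).mono_set fun x hx => ?_
  by_cases h' : x ≤ T
  · exact Or.inl ⟨le_of_lt hx, h'⟩
  · exact Or.inr (not_le.1 h')

lemma cont_glue (f : ℝ → ℝ) (hf : ContinuousOn f (Ioi 0)) (h0 : Tendsto f (𝓝[>] 0) (𝓝 1)) :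
    Continuous (fun s => if s ≤ 0 then 1 else f s) := by
  rw [continuous_iff_continuousAt]
  intro s
  rcases lt_trichotomy s 0 with hs | rfl | hs
  · refine continuousAt_const (y := (1:ℝ)) |>.congr ?_
    filter_upwards [Iio_mem_nhds hs] with x hx
    simp [le_of_lt (mem_Iio.1 hx)]
  · rw [continuousAt_iff_continuous_left_right]
    constructor
    · refine (continuousWithinAt_const (b := (1:ℝ))).congr (fun x hx => ?_) (by simp)
      simp [mem_Iic.1 hx]
    · rw [← continuousWithinAt_Ioi_iff_Ici]
      show Tendsto _ _ _
      simp only [le_refl, if_true]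
      refine h0.congr' ?_
      filter_upwards [self_mem_nhdsWithin] with x hx
      simp [not_le.2 (mem_Ioi.1 hx)]
  · refine (hf.continuousAt (Ioi_mem_nhds hs)).congr ?_
    filter_upwards [Ioi_mem_nhds hs] with x hx
    simp [not_le.2 (mem_Ioi.1 hx)]

end Aux

open Filter Topology Set

/-- Theorem 7.1 of the paper, inverse part. For `n ≥ 3`, given a
positive `h ∈ C¹(ℝ)` with `h'/h → 0`, the scaling-invariance property (ii) and
`∫₁^∞ dτ/h(τ) = +∞`, and a weight `ρ ∈ ℬ` with `s ρ'(s)/ρ(s) → -2` and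
`ρ(s) ∼ ((n-2)/(n-1))²/(s² h(((n-2)/(n-1)) log s)²)`, the map
`g(s) = ∫₀^s ρ(τ)^{1/2} dτ` is an increasing bijection of `[0,∞)` onto itself and the
model function `ψ(r) = g⁻¹(r) ρ(g⁻¹(r))^{1/(2(n-1))}` belongs to `𝒜`, tends to `+∞`,
and satisfies `(log ψ)'(r)/h(log ψ(r)) → 1`. -/
theorem stmt_8
    (n : ℕ) (hn : 3 ≤ n)
    (h : ℝ → ℝ) (hh1 : ContDiff ℝ 1 h) (hhpos : ∀ τ : ℝ, 0 < h τ)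
    (hi : Filter.Tendsto (fun τ => deriv h τ / h τ) Filter.atTop (nhds 0))
    (hii : ∀ ε : ℝ → ℝ, Filter.Tendsto ε Filter.atTop (nhds 0) →
      Filter.Tendsto (fun τ =>
          h (τ + (1 / ((n : ℝ) - 1)) * Real.log (h τ)
              + (1 / ((n : ℝ) - 1)) * Real.log (((n : ℝ) - 1) / ((n : ℝ) - 2)) + ε τ)
            / h τ)
        Filter.atTop (nhds 1))
    (hiiint : ¬ MeasureTheory.IntegrableOn (fun τ => 1 / h τ) (Set.Ioi 1))
    (ρ : ℝ → ℝ) (hρB : classB ρ)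
    (hρderiv : Filter.Tendsto (fun s => s * deriv ρ s / ρ s) Filter.atTop (nhds (-2)))
    (hρasymp : Filter.Tendsto (fun s =>
        ρ s / ((((n : ℝ) - 2) / ((n : ℝ) - 1)) ^ 2 /
          (s ^ 2 * (h (((n : ℝ) - 2) / ((n : ℝ) - 1) * Real.log s)) ^ 2)))
      Filter.atTop (nhds 1))
    (g : ℝ → ℝ) (hg : ∀ s : ℝ, g s = ∫ τ in (0 : ℝ)..s, Real.sqrt (ρ τ)) :
    StrictMonoOn g (Set.Ici 0) ∧
    Set.BijOn g (Set.Ici 0) (Set.Ici 0) ∧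
    ∃ gInv : ℝ → ℝ,
      (∀ s : ℝ, 0 ≤ s → gInv (g s) = s) ∧
      (∀ r : ℝ, 0 ≤ r → g (gInv r) = r) ∧
      ∀ ψ : ℝ → ℝ,
        (∀ r : ℝ, ψ r = gInv r * ρ (gInv r) ^ (1 / (2 * ((n : ℝ) - 1)))) →
        classA ψ ∧
        Filter.Tendsto ψ Filter.atTop Filter.atTop ∧
        Filter.Tendsto (fun r => (deriv ψ r / ψ r) / h (Real.log (ψ r)))
          Filter.atTop (nhds 1) := by
  obtain ⟨hρs, hρ0, hρ0', hρpos⟩ := hρB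
  have hn' : (3 : ℝ) ≤ n := by exact_mod_cast hn
  obtain ⟨c, hc⟩ : ∃ c : ℝ, c = ((n : ℝ) - 2) / ((n : ℝ) - 1) := ⟨_, rfl⟩
  obtain ⟨k, hk⟩ : ∃ k : ℝ, k = 1 / ((n : ℝ) - 1) := ⟨_, rfl⟩
  obtain ⟨a, ha⟩ : ∃ a : ℝ, a = 1 / (2 * ((n : ℝ) - 1)) := ⟨_, rfl⟩
  have hn1 : (n : ℝ) - 1 ≠ 0 := by linarith
  have hn2 : (n : ℝ) - 2 ≠ 0 := by linarith
  have hcpos : 0 < c := by rw [hc]; exact div_pos (by linarith) (by linarith)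
  have hka : k = 2 * a := by rw [hk, ha]; field_simp
  have hck : c = 1 - k := by rw [hc, hk]; field_simp; ring
  have hcinv : ((n : ℝ) - 1) / ((n : ℝ) - 2) = c⁻¹ := by rw [hc, inv_div]
  rw [← hc] at hρasymp
  rw [← ha]
  rw [← hk, hcinv] at hii
  have hiiz := hii (fun _ => 0) tendsto_const_nhds
  simp only [add_zero] at hiiz
  have hρd : ∀ s, 0 < s → HasDerivAt ρ (deriv ρ s) s := fun s hs =>
    ((hρs.contDiffAt (Ioi_mem_nhds hs)).differentiableAt (by simp)).hasDerivAt
  -- extended weight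
  obtain ⟨R, hR⟩ : ∃ R : ℝ → ℝ, R = fun s => if s ≤ 0 then 1 else ρ s := ⟨_, rfl⟩
  have hRc : Continuous R := by rw [hR]; exact cont_glue ρ hρs.continuousOn hρ0
  have hRneg : ∀ s, s ≤ 0 → R s = 1 := fun s hs => by rw [hR]; simp [hs]
  have hRp : ∀ s, 0 < s → R s = ρ s := fun s hs => by rw [hR]; simp [not_le.2 hs]
  have hRpos : ∀ s, 0 < R s := fun s => by
    rcases le_or_gt s 0 with hs | hs
    · rw [hRneg s hs]; exact one_pos
    · rw [hRp s hs]; exact hρpos s hs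
  obtain ⟨G, hG⟩ : ∃ G : ℝ → ℝ, G = fun s => ∫ τ in (0 : ℝ)..s, Real.sqrt (R τ) := ⟨_, rfl⟩
  have hsR : Continuous fun τ => Real.sqrt (R τ) := hRc.sqrt
  have hsRpos : ∀ s, 0 < Real.sqrt (R s) := fun s => Real.sqrt_pos.2 (hRpos s)
  have hGd : ∀ s, HasDerivAt G (Real.sqrt (R s)) s := fun s => by
    rw [hG]; exact (hsR.integral_hasStrictDerivAt 0 s).hasDerivAt
  have hgG : ∀ s, 0 ≤ s → g s = G s := fun s hs => by
    rw [hg, hG]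
    apply intervalIntegral.integral_congr_ae
    refine MeasureTheory.ae_of_all _ fun x hx => ?_
    rw [uIoc_of_le hs] at hx
    rw [hRp x hx.1]
  have hGmono : StrictMono G := strictMono_of_deriv_pos fun x => by
    rw [(hGd x).deriv]; exact hsRpos x
  have hGcont : Continuous G := continuous_iff_continuousAt.2 fun x => (hGd x).continuousAt
  have hG0 : G 0 = 0 := by rw [hG]; simp
  have hGneg : ∀ s, s ≤ 0 → G s = s := fun s hs => by
    have : G s = ∫ τ in (0 : ℝ)..s, (1 : ℝ) := by
      rw [hG]
      apply intervalIntegral.integral_congr_ae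
      refine MeasureTheory.ae_of_all _ fun x hx => ?_
      rw [uIoc_of_ge hs] at hx
      rw [hRneg x hx.2, Real.sqrt_one]
    rw [this]; simp
  -- asymptotics
  have hq : Tendsto (fun s => ρ s * s ^ 2 * h (c * Real.log s) ^ 2 / c ^ 2) atTop (𝓝 1) := by
    refine hρasymp.congr' ?_
    filter_upwards [eventually_gt_atTop 0] with s hs
    have := (hhpos (c * Real.log s)).ne'
    field_simp
  have hm : Tendsto (fun s => s * Real.sqrt (R s) * h (c * Real.log s) / c) atTop (𝓝 1) := by
    have := hq.sqrt
    rw [Real.sqrt_one] at this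
    refine this.congr' ?_
    filter_upwards [eventually_gt_atTop 0] with s hs
    have h1 := hhpos (c * Real.log s)
    rw [hRp s hs, Real.sqrt_eq_iff_mul_self_eq (by have := hρpos s hs; positivity) (by positivity)]
    have := Real.mul_self_sqrt (hρpos s hs).le
    field_simp
    rw [Real.sq_sqrt (hρpos s hs).le]
  have hGtop : Tendsto G atTop atTop :=
    aux_div h hh1 hhpos hiiint c hcpos G _ hGd hGmono.monotone hm
  have hGbot : Tendsto G atBot atBot := by
    refine tendsto_id.congr' ?_
    filter_upwards [eventually_le_atBot 0] with s hs
    exact (hGneg s hs).symm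
  have hGsurj : Function.Surjective G := hGcont.surjective hGtop hGbot
  let e : ℝ ≃o ℝ := hGmono.orderIsoOfSurjective G hGsurj
  have heG : ∀ s, e s = G s := fun s => rfl
  have hsymm : ∀ s, e.symm (G s) = s := fun s => e.symm_apply_apply s
  have hsymm' : ∀ r, G (e.symm r) = r := fun r => e.apply_symm_apply r
  have hpos' : ∀ r, 0 ≤ r → 0 ≤ e.symm r := fun r hr => by
    rw [e.le_symm_apply, heG, hG0]; exact hr
  have hpos'' : ∀ r, 0 < r → 0 < e.symm r := fun r hr => by
    rw [e.lt_symm_apply, heG, hG0]; exact hr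
  have hgmono : StrictMonoOn g (Ici 0) := fun x hx y hy hxy => by
    rw [hgG x hx, hgG y hy]; exact hGmono hxy
  refine ⟨hgmono, ⟨?_, hgmono.injOn, ?_⟩, e.symm, ?_, ?_, ?_⟩
  · intro s hs
    show 0 ≤ g s
    rw [hgG s hs, ← hG0]; exact hGmono.monotone hs
  · intro r hr
    exact ⟨e.symm r, hpos' r hr, by rw [hgG _ (hpos' r hr), hsymm']⟩
  · intro s hs
    rw [hgG s hs, hsymm]
  · intro r hr
    rw [hgG _ (hpos' r hr), hsymm']
  intro ψ hψ
  -- the inverse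
  have hGC1 : ContDiff ℝ 1 G := by
    rw [contDiff_one_iff_deriv]
    refine ⟨fun x => (hGd x).differentiableAt, ?_⟩
    rw [show deriv G = fun τ => Real.sqrt (R τ) from funext fun x => (hGd x).deriv]
    exact hsR
  have hIC1 : ContDiff ℝ 1 e.symm :=
    e.toHomeomorph.contDiff_symm_deriv (fun x => (hsRpos x).ne') hGd hGC1
  have hGsm : ContDiffOn ℝ (⊤ : ℕ∞) G (Ioi 0) := by
    rw [contDiffOn_infty_iff_deriv_of_isOpen isOpen_Ioi]
    refine ⟨fun x _ => (hGd x).differentiableAt.differentiableWithinAt, ?_⟩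
    refine (hρs.sqrt (fun x hx => (hρpos x hx).ne')).congr fun x hx => ?_
    rw [(hGd x).deriv, hRp x hx]
  have hIsm : ∀ r, 0 < r → ContDiffAt ℝ (⊤ : ℕ∞) e.symm r := fun r hr =>
    e.toHomeomorph.toOpenPartialHomeomorph.contDiffAt_symm_deriv (hsRpos (e.symm r)).ne'
      (mem_univ r) (hGd (e.symm r)) (hGsm.contDiffAt (Ioi_mem_nhds (hpos'' r hr)))
  have hId : ∀ r, HasDerivAt e.symm (Real.sqrt (R (e.symm r)))⁻¹ r := fun r =>
    HasDerivAt.of_local_left_inverse hIC1.continuous.continuousAt (hGd _) (hsRpos _).ne'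
      (Eventually.of_forall hsymm')
  have hItop : Tendsto e.symm atTop atTop := e.symm.tendsto_atTop
  -- φ
  obtain ⟨φ, hφ⟩ : ∃ φ : ℝ → ℝ, φ = fun s => s * R s ^ a := ⟨_, rfl⟩
  obtain ⟨D, hD⟩ : ∃ D : ℝ → ℝ,
    D = fun s => if s ≤ 0 then 1 else ρ s ^ a + a * (s * deriv ρ s) * ρ s ^ (a - 1) := ⟨_, rfl⟩
  have hDp : ∀ s, 0 < s → D s = ρ s ^ a + a * (s * deriv ρ s) * ρ s ^ (a - 1) :=
    fun s hs => by rw [hD]; simp [not_le.2 hs]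
  have hDneg : ∀ s, s ≤ 0 → D s = 1 := fun s hs => by rw [hD]; simp [hs]
  have hrpc : ∀ b : ℝ, ContinuousOn (fun s => ρ s ^ b) (Ioi 0) := fun b =>
    hρs.continuousOn.rpow_const fun x hx => Or.inl (hρpos x hx).ne'
  have hrp0 : ∀ b : ℝ, Tendsto (fun s => ρ s ^ b) (𝓝[>] 0) (𝓝 1) := fun b => by
    simpa using hρ0.rpow_const (p := b) (Or.inl one_ne_zero)
  have hDc : Continuous D := by
    rw [hD]
    apply cont_glue
    · have hdc : ContinuousOn (deriv ρ) (Ioi 0) :=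
        ((contDiffOn_infty_iff_deriv_of_isOpen isOpen_Ioi).1 hρs).2.continuousOn
      exact (hrpc a).add ((continuousOn_const.mul (continuousOn_id.mul hdc)).mul (hrpc (a - 1)))
    · have := (hrp0 a).add ((hρ0'.const_mul a).mul (hrp0 (a - 1)))
      simpa using this
  have hφd : ∀ s, HasDerivAt φ (D s) s := by
    intro s
    rcases lt_trichotomy s 0 with hs | rfl | hs
    · rw [hDneg s hs.le]
      refine (hasDerivAt_id s).congr_of_eventuallyEq ?_
      filter_upwards [Iio_mem_nhds hs] with x hx
      rw [hφ]; simp [hRneg x (le_of_lt hx)]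
    · rw [hDneg 0 le_rfl, hasDerivAt_iff_tendsto_slope]
      have h1 : Tendsto (fun s => R s ^ a) (𝓝 0) (𝓝 1) := by
        have := (hRc.tendsto 0).rpow_const (p := a) (Or.inl (hRpos 0).ne')
        simpa [hRneg 0 le_rfl] using this
      refine (h1.mono_left nhdsWithin_le_nhds).congr' ?_
      filter_upwards [self_mem_nhdsWithin] with x hx
      have hx' : x ≠ 0 := hx
      rw [slope_def_field, hφ]
      field_simp
      simp
    · rw [hDp s hs]
      have h1 := (hasDerivAt_id s).mul ((hρd s hs).rpow_const (p := a) (Or.inl (hρpos s hs).ne'))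
      have h2 : HasDerivAt (fun s => s * ρ s ^ a)
          (ρ s ^ a + a * (s * deriv ρ s) * ρ s ^ (a - 1)) s := by
        refine h1.congr_deriv ?_
        simp only [id]
        ring
      refine h2.congr_of_eventuallyEq ?_
      filter_upwards [Ioi_mem_nhds hs] with x hx
      rw [hφ]; simp only [hRp x hx]
  have hφC1 : ContDiff ℝ 1 φ := by
    rw [contDiff_one_iff_deriv]
    refine ⟨fun x => (hφd x).differentiableAt, ?_⟩
    rw [show deriv φ = D from funext fun x => (hφd x).deriv]
    exact hDc
  have hφsm : ∀ s, 0 < s → ContDiffAt ℝ (⊤ : ℕ∞) φ s := fun s hs => by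
    have h1 : ContDiffOn ℝ (⊤ : ℕ∞) (fun s => s * ρ s ^ a) (Ioi 0) :=
      contDiffOn_id.mul (hρs.rpow_const_of_ne fun x hx => (hρpos x hx).ne')
    refine (h1.contDiffAt (Ioi_mem_nhds hs)).congr_of_eventuallyEq ?_
    filter_upwards [Ioi_mem_nhds hs] with x hx
    rw [hφ]; simp only [hRp x hx]
  have he0 : e.symm 0 = 0 := by rw [← hG0, hsymm, hG0]
  have hψφ : ∀ r, 0 ≤ r → ψ r = φ (e.symm r) := fun r hr => by
    rw [hψ, hφ]
    rcases hr.eq_or_lt with rfl | hr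
    · simp [he0]
    · simp only [hRp _ (hpos'' r hr)]
  have hcd : ∀ r, HasDerivAt (fun r => φ (e.symm r)) (D (e.symm r) * (Real.sqrt (R (e.symm r)))⁻¹) r :=
    fun r => (hφd _).comp r (hId r)
  have hψd : ∀ r, 0 < r → HasDerivAt ψ (D (e.symm r) * (Real.sqrt (R (e.symm r)))⁻¹) r :=
    fun r hr => (hcd r).congr_of_eventuallyEq (by
      filter_upwards [Ioi_mem_nhds hr] with x hx
      exact hψφ x (le_of_lt hx))
  have hψpos : ∀ r, 0 < r → 0 < ψ r := fun r hr => by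
    rw [hψ]
    exact mul_pos (hpos'' r hr) (Real.rpow_pos_of_pos (hρpos _ (hpos'' r hr)) _)
  have hA : classA ψ := by
    refine ⟨?_, ?_, ?_, ?_, hψpos⟩
    · have h1 : ContDiffOn ℝ (⊤ : ℕ∞) (fun r => φ (e.symm r)) (Ioi 0) := fun r hr =>
        ((hφsm _ (hpos'' r hr)).comp r (hIsm r hr)).contDiffWithinAt
      exact h1.congr fun r hr => hψφ r (le_of_lt hr)
    · exact ((hφC1.comp hIC1).contDiffOn).congr fun r hr => hψφ r hr
    · rw [hψ, he0, zero_mul]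
    · have h1 : HasDerivWithinAt ψ (D (e.symm 0) * (Real.sqrt (R (e.symm 0)))⁻¹) (Ici 0) 0 :=
        (hcd 0).hasDerivWithinAt.congr (fun r hr => hψφ r hr) (hψφ 0 le_rfl)
      rw [h1.derivWithin (uniqueDiffOn_Ici 0 0 self_mem_Ici), he0, hDneg 0 le_rfl,
        hRneg 0 le_rfl]
      simp
  -- infinity
  have hlogq : Tendsto (fun s => Real.log (ρ s * s ^ 2 * h (c * Real.log s) ^ 2 / c ^ 2))
      atTop (𝓝 0) := by
    have := ((Real.continuousAt_log one_ne_zero).tendsto).comp hq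
    rwa [Real.log_one] at this
  have hlogψ : ∀ r, 0 < r → Real.log (ψ r) =
      Real.log (e.symm r) + a * Real.log (ρ (e.symm r)) := fun r hr => by
    have h1 := hpos'' r hr
    have h2 := hρpos _ h1
    rw [hψ, Real.log_mul h1.ne' (Real.rpow_pos_of_pos h2 _).ne', Real.log_rpow h2]
  have ht : Tendsto (fun r => c * Real.log (e.symm r)) atTop atTop :=
    (Real.tendsto_log_atTop.comp hItop).const_mul_atTop hcpos
  obtain ⟨hut, hur⟩ := aux_h h hh1 hhpos hi k (k * Real.log c⁻¹) hiiz
    (fun r => Real.log (ψ r)) (fun r => c * Real.log (e.symm r)) ht (by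
      have := (hlogq.comp hItop).const_mul a
      rw [mul_zero] at this
      refine this.congr' ?_
      filter_upwards [eventually_gt_atTop 0] with r hr
      have h1 := hpos'' r hr
      have h2 := hρpos _ h1
      have h3 := hhpos (c * Real.log (e.symm r))
      simp only [Function.comp]
      rw [hlogψ r hr, Real.log_div (by positivity) (by positivity),
        Real.log_mul (by positivity) (by positivity), Real.log_mul (by positivity) (by positivity),
        Real.log_pow, Real.log_pow, Real.log_pow, Real.log_inv]
      generalize Real.log (h (c * Real.log (e.symm r))) = y
      push_cast
      rw [hck, hka]
      ring)
  refine ⟨hA, ?_, ?_⟩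
  · refine (Real.tendsto_exp_atTop.comp hut).congr' ?_
    filter_upwards [eventually_gt_atTop 0] with r hr
    exact Real.exp_log (hψpos r hr)
  · have h1 : Tendsto (fun s => (1 + a * (s * deriv ρ s / ρ s)) / c) atTop (𝓝 1) := by
      have := ((hρderiv.const_mul a).const_add 1).div_const c
      rwa [show (1 + a * -2) / c = 1 by rw [div_eq_one_iff_eq hcpos.ne', hck, hka]; ring] at this
    have h2 := ((h1.comp hItop).div (hm.comp hItop) one_ne_zero).mul hur
    simp only [div_one, mul_one] at h2
    refine h2.congr' ?_
    filter_upwards [eventually_gt_atTop 0] with r hr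
    have hs := hpos'' r hr
    have hρp := hρpos _ hs
    rw [(hψd r hr).deriv, hψφ r hr.le, hφ, hDp _ hs]
    simp only [Function.comp, Pi.div_apply, hRp _ hs]
    have h3 := hhpos (c * Real.log (e.symm r))
    have h4 := hhpos (Real.log (e.symm r * ρ (e.symm r) ^ a))
    have h5 := Real.sqrt_pos.2 hρp
    have h6 := Real.rpow_pos_of_pos hρp a
    rw [Real.rpow_sub_one hρp.ne']
    generalize h (Real.log (e.symm r * ρ (e.symm r) ^ a)) = w at *
    generalize ρ (e.symm r) ^ a = z at *
    generalize h (c * Real.log (e.symm r)) = y at *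
    field_simp
end
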